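/- For any discrete memoryless channel W: X → Y on finite alphabets, the α-Rényi simulation rate satisfies: R_RST^{(α)}(W) = I(W) (the Shannon capacity) for all α ∈ (0,1], and R_RST^{(α)}(W) = I_α(W) (the order-α Rényi capacity) for all α ∈ {0} ∪ (1,∞]. -/

import Mathlib

open scoped ENNReal NNReal BigOperators Classical
open Filter

noncomputable section

namespace RST

/-- Base-2 logarithm `ℝ≥0∞ → EReal`, with `log 0 = ⊥` and `log ⊤ = ⊤`. -/
def elog2 (s : ℝ≥0∞) : EReal :=
  if s = 0 then ⊥ else if s = ⊤ then ⊤ else ((Real.logb 2 s.toReal : ℝ) : EReal)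

/-- Base-2 logarithm `EReal → EReal` (for nonnegative arguments). -/
def eLog2 (x : EReal) : EReal :=
  if x = ⊤ then ⊤ else if x ≤ 0 then ⊥ else ((Real.logb 2 x.toReal : ℝ) : EReal)

/-- Base-2 exponential `EReal → ℝ≥0∞`. -/
def epow2 (x : EReal) : ℝ≥0∞ :=
  if x = ⊤ then ⊤ else if x = ⊥ then 0 else ENNReal.ofReal ((2 : ℝ) ^ x.toReal)

variable {X Y : Type*}

/-- A probability distribution on a finite alphabet, as an `ℝ≥0∞`-valued function. -/
def IsDist [Fintype X] (P : X → ℝ≥0∞) : Prop := ∑ x, P x = 1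

/-- A discrete memoryless channel: every row is a probability distribution. -/
def IsChannel [Fintype X] [Fintype Y] (W : X → Y → ℝ≥0∞) : Prop := ∀ x, ∑ y, W x y = 1

/-- Order-`α` Rényi divergence (base 2), with the order `α ∈ [0,∞]` encoded as `ℝ≥0∞`.
The conventions `0/0 = 0` and `a/0 = ∞` (for `a > 0`, `α > 1`) are built into `ℝ≥0∞`
arithmetic.  The second argument is allowed to be an arbitrary nonnegative vector. -/
def renyiD [Fintype X] (α : ℝ≥0∞) (P Q : X → ℝ≥0∞) : EReal :=
  if α = 0 then - elog2 (∑ x ∈ Finset.univ.filter fun x => P x ≠ 0, Q x)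
  else if α = 1 then ∑ x, ((P x).toReal : EReal) * elog2 (P x / Q x)
  else if α = ⊤ then elog2 (⨆ x, P x / Q x)
  else (((α.toReal - 1)⁻¹ : ℝ) : EReal) *
    elog2 (∑ x, P x ^ α.toReal * Q x ^ (1 - α.toReal))

/-- The `X`-marginal of a joint distribution on `X × Y`. -/
def margX [Fintype X] [Fintype Y] (P : X × Y → ℝ≥0∞) : X → ℝ≥0∞ := fun x => ∑ y, P (x, y)

/-- Order-`α` Rényi mutual information `I_α(X:Y)_P = min_{Q_Y} D_α(P‖P_X × Q_Y)`. -/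
def renyiMI [Fintype X] [Fintype Y] (α : ℝ≥0∞) (P : X × Y → ℝ≥0∞) : EReal :=
  ⨅ Q : {Q : Y → ℝ≥0∞ // IsDist Q}, renyiD α P fun p => margX P p.1 * Q.1 p.2

/-- The joint input-output distribution `P_X · W`. -/
def joint [Fintype X] [Fintype Y] (PX : X → ℝ≥0∞) (W : X → Y → ℝ≥0∞) : X × Y → ℝ≥0∞ :=
  fun p => PX p.1 * W p.1 p.2

/-- Order-`α` Rényi capacity `I_α(W) = max_{P_X} I_α(X:Y)_{P_X · W}`. -/
def renyiCap [Fintype X] [Fintype Y] (α : ℝ≥0∞) (W : X → Y → ℝ≥0∞) : EReal :=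
  ⨆ P : {P : X → ℝ≥0∞ // IsDist P}, renyiMI α (joint P.1 W)

/-- `N` is a simulation of a channel `X → Y` with communication cost at most `c` bits:
shared randomness `K = Fin m` with distribution `PK`, a message set `{1,…,M}` with
`log₂ M ≤ c`, an encoder `E` and a decoder `D`. -/
def IsSimulation [Fintype X] [Fintype Y] (c : ℝ) (N : X → Y → ℝ≥0∞) : Prop :=
  ∃ (m M : ℕ) (PK : Fin m → ℝ≥0∞) (E : X → Fin m → Fin M → ℝ≥0∞)
    (D : Fin M → Fin m → Y → ℝ≥0∞),
    0 < M ∧ Real.logb 2 M ≤ c ∧ (∑ k, PK k = 1) ∧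
    (∀ x k, ∑ j, E x k j = 1) ∧ (∀ j k, ∑ y, D j k y = 1) ∧
    ∀ x y, N x y = ∑ k, ∑ j, PK k * E x k j * D j k y

/-- `D_α(W, N) := max_x D_α(W(·|x) ‖ N(·|x))`. -/
def chD [Fintype X] [Fintype Y] (α : ℝ≥0∞) (W N : X → Y → ℝ≥0∞) : EReal :=
  ⨆ x, renyiD α (W x) (N x)

/-- `𝖣_α(W, c) := min_{N ∈ A(W,c)} D_α(W, N)`. -/
def simD [Fintype X] [Fintype Y] (α : ℝ≥0∞) (W : X → Y → ℝ≥0∞) (c : ℝ) : EReal :=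
  ⨅ N : {N : X → Y → ℝ≥0∞ // IsSimulation c N}, chD α W N.1

/-- The `n`-fold memoryless extension `W^{×n}` of a channel `W`. -/
def prodCh [Fintype X] [Fintype Y] (n : ℕ) (W : X → Y → ℝ≥0∞) :
    (Fin n → X) → (Fin n → Y) → ℝ≥0∞ :=
  fun xs ys => ∏ i, W (xs i) (ys i)

/-- A sequence of communication costs with rate at most `r`. -/
def RateOK (r : ℝ) (c : ℕ → ℝ) : Prop :=
  (∀ n, 0 ≤ c n) ∧ Filter.limsup (fun n : ℕ => ((c n / n : ℝ) : EReal)) Filter.atTop ≤ (r : EReal)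

/-- Reliability function `E_rf^{(α)}(W, r)`. -/
def Erf [Fintype X] [Fintype Y] (α : ℝ≥0∞) (W : X → Y → ℝ≥0∞) (r : ℝ) : EReal :=
  ⨆ c : {c : ℕ → ℝ // RateOK r c},
    Filter.liminf
      (fun n : ℕ => (((-1 : ℝ) / n : ℝ) : EReal) * eLog2 (simD α (prodCh n W) (c.1 n)))
      Filter.atTop

/-- Strong converse exponent `E_sc^{(α)}(W, r)`. -/
def Esc [Fintype X] [Fintype Y] (α : ℝ≥0∞) (W : X → Y → ℝ≥0∞) (r : ℝ) : EReal :=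
  ⨅ c : {c : ℕ → ℝ // RateOK r c},
    Filter.limsup
      (fun n : ℕ => (((1 : ℝ) / n : ℝ) : EReal) * simD α (prodCh n W) (c.1 n))
      Filter.atTop

/-- The `α`-Rényi simulation rate `R_RST^{(α)}(W)`. -/
def Rrst [Fintype X] [Fintype Y] (α : ℝ≥0∞) (W : X → Y → ℝ≥0∞) : EReal :=
  ⨅ c : {c : ℕ → ℝ // (∀ n, 0 ≤ c n) ∧
      Filter.limsup (fun n : ℕ => simD α (prodCh n W) (c n)) Filter.atTop = 0},
    Filter.limsup (fun n : ℕ => ((c.1 n / n : ℝ) : EReal)) Filter.atTop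

/-- n-fold product of a joint distribution on `X × Y`, as a distribution on pairs of
sequences. -/
def prodJoint [Fintype X] [Fintype Y] (n : ℕ) (P : X × Y → ℝ≥0∞) :
    (Fin n → X) × (Fin n → Y) → ℝ≥0∞ :=
  fun p => ∏ i, P (p.1 i, p.2 i)

/-- n-fold product distribution. -/
def prodDist [Fintype X] (n : ℕ) (P : X → ℝ≥0∞) : (Fin n → X) → ℝ≥0∞ :=
  fun xs => ∏ i, P (xs i)

/-- The type (empirical count vector) of a sequence. -/
def seqType [Fintype Y] [DecidableEq Y] {n : ℕ} (ys : Fin n → Y) : Y → ℕ :=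
  fun y => (Finset.univ.filter fun i => ys i = y).card

/-- The cardinality of the type class of a sequence. -/
def typeClassCard [Fintype Y] [DecidableEq Y] {n : ℕ} (ys : Fin n → Y) : ℕ :=
  (Finset.univ.filter fun zs : Fin n → Y => seqType zs = seqType ys).card

/-- The number of types of sequences in `Y^n`. -/
def numTypes (Y : Type*) [Fintype Y] [DecidableEq Y] (n : ℕ) : ℕ :=
  (Finset.univ.image fun ys : Fin n → Y => seqType ys).card

/-- `Φ_{Y^n}`: the uniform mixture over type classes of `Y^n`. -/
def PhiY (Y : Type*) [Fintype Y] [DecidableEq Y] (n : ℕ) : (Fin n → Y) → ℝ≥0∞ :=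
  fun ys => ((numTypes Y n : ℝ≥0∞) * (typeClassCard ys : ℝ≥0∞))⁻¹

end RST

namespace RST


section

variable {X Y : Type*}

lemma elog2_le_iff {s : ℝ≥0∞} {t : ℝ} :
    elog2 s ≤ (t : EReal) ↔ s ≤ ENNReal.ofReal ((2:ℝ) ^ t) := by
  unfold elog2
  split_ifs with h1 h2
  · simp [h1]
  · subst h2; simp
  · have h3 : 0 < s.toReal := ENNReal.toReal_pos h1 h2
    rw [EReal.coe_le_coe_iff, Real.logb_le_iff_le_rpow (by norm_num) h3,
      ENNReal.le_ofReal_iff_toReal_le h2 (by positivity)]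

lemma le_elog2_iff {s : ℝ≥0∞} {t : ℝ} :
    (t : EReal) ≤ elog2 s ↔ ENNReal.ofReal ((2:ℝ) ^ t) ≤ s := by
  unfold elog2
  have h2t : (0:ℝ) < 2 ^ t := by positivity
  split_ifs with h1 h2
  · simp [h1]; positivity
  · subst h2; simp
  · have h3 : 0 < s.toReal := ENNReal.toReal_pos h1 h2
    rw [EReal.coe_le_coe_iff, Real.le_logb_iff_rpow_le (by norm_num) h3,
      ENNReal.ofReal_le_iff_le_toReal h2]

lemma coe_mul_le_iff {k e : ℝ} (hk : 0 < k) (z : EReal) :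
    ((k⁻¹ : ℝ) : EReal) * z ≤ (e : EReal) ↔ z ≤ ((k * e : ℝ) : EReal) := by
  have hk' : 0 < k⁻¹ := inv_pos.2 hk
  induction z with
  | bot => simp [EReal.coe_mul_bot_of_pos hk']
  | top => simp only [EReal.coe_mul_top_of_pos hk', top_le_iff, EReal.coe_ne_top]
  | coe z => rw [← EReal.coe_mul, EReal.coe_le_coe_iff, EReal.coe_le_coe_iff, inv_mul_le_iff₀ hk]

lemma le_coe_mul_iff {k e : ℝ} (hk : 0 < k) (z : EReal) :
    (e : EReal) ≤ ((k⁻¹ : ℝ) : EReal) * z ↔ ((k * e : ℝ) : EReal) ≤ z := by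
  have hk' : 0 < k⁻¹ := inv_pos.2 hk
  induction z with
  | bot => simp only [EReal.coe_mul_bot_of_pos hk', le_bot_iff, EReal.coe_ne_bot]
  | top => simp [EReal.coe_mul_top_of_pos hk']
  | coe z => rw [← EReal.coe_mul, EReal.coe_le_coe_iff, EReal.coe_le_coe_iff, le_inv_mul_iff₀ hk]

lemma coe_mul_le_iff_neg {k e : ℝ} (hk : k < 0) (z : EReal) :
    ((k⁻¹ : ℝ) : EReal) * z ≤ (e : EReal) ↔ ((k * e : ℝ) : EReal) ≤ z := by
  have hk' : k⁻¹ < 0 := inv_lt_zero.2 hk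
  induction z with
  | bot => simp only [EReal.coe_mul_bot_of_neg hk', top_le_iff, EReal.coe_ne_top, le_bot_iff,
      EReal.coe_ne_bot]
  | top => simp [EReal.coe_mul_top_of_neg hk']
  | coe z =>
    rw [← EReal.coe_mul, EReal.coe_le_coe_iff, EReal.coe_le_coe_iff]
    constructor
    · intro h
      have := mul_le_mul_of_nonpos_left h hk.le
      rwa [mul_inv_cancel_left₀ hk.ne] at this
    · intro h
      have := mul_le_mul_of_nonpos_left h hk'.le
      rwa [inv_mul_cancel_left₀ hk.ne] at this

lemma toReal_gt {α : ℝ≥0∞} (h1 : 1 < α) (h2 : α ≠ ⊤) : 1 < α.toReal := by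
  rw [← ENNReal.toReal_one]; exact (ENNReal.toReal_lt_toReal ENNReal.one_ne_top h2).2 h1

lemma toReal_lt {α : ℝ≥0∞} (h1 : α < 1) : α.toReal < 1 := by
  rw [← ENNReal.toReal_one]
  exact (ENNReal.toReal_lt_toReal (h1.trans ENNReal.one_lt_top).ne ENNReal.one_ne_top).2 h1

lemma renyiD_gt_le_iff [Fintype X] {α : ℝ≥0∞} (h1 : 1 < α) (h2 : α ≠ ⊤) (P Q : X → ℝ≥0∞)
    (e : ℝ) : renyiD α P Q ≤ (e : EReal) ↔
      ∑ x, P x ^ α.toReal * Q x ^ (1 - α.toReal) ≤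
        ENNReal.ofReal ((2:ℝ) ^ ((α.toReal - 1) * e)) := by
  have h3 := toReal_gt h1 h2
  have h0 : α ≠ 0 := (zero_lt_one.trans h1).ne'
  unfold renyiD
  rw [if_neg h0, if_neg h1.ne', if_neg h2, coe_mul_le_iff (by linarith), elog2_le_iff]

lemma le_renyiD_gt_iff [Fintype X] {α : ℝ≥0∞} (h1 : 1 < α) (h2 : α ≠ ⊤) (P Q : X → ℝ≥0∞)
    (e : ℝ) : (e : EReal) ≤ renyiD α P Q ↔
      ENNReal.ofReal ((2:ℝ) ^ ((α.toReal - 1) * e)) ≤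
        ∑ x, P x ^ α.toReal * Q x ^ (1 - α.toReal) := by
  have h3 := toReal_gt h1 h2
  have h0 : α ≠ 0 := (zero_lt_one.trans h1).ne'
  unfold renyiD
  rw [if_neg h0, if_neg h1.ne', if_neg h2, le_coe_mul_iff (by linarith), le_elog2_iff]

lemma renyiD_lt_le_iff [Fintype X] {α : ℝ≥0∞} (h0 : 0 < α) (h1 : α < 1) (P Q : X → ℝ≥0∞)
    (e : ℝ) : renyiD α P Q ≤ (e : EReal) ↔
      ENNReal.ofReal ((2:ℝ) ^ ((α.toReal - 1) * e)) ≤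
        ∑ x, P x ^ α.toReal * Q x ^ (1 - α.toReal) := by
  have h3 := toReal_lt h1
  have h2 : α ≠ ⊤ := (h1.trans ENNReal.one_lt_top).ne
  unfold renyiD
  rw [if_neg h0.ne', if_neg h1.ne, if_neg h2, coe_mul_le_iff_neg (by linarith), le_elog2_iff]

lemma renyiD_zero_le_iff [Fintype X] (P Q : X → ℝ≥0∞) (e : ℝ) :
    renyiD 0 P Q ≤ (e : EReal) ↔
      ENNReal.ofReal ((2:ℝ) ^ (-e)) ≤ ∑ x ∈ Finset.univ.filter fun x => P x ≠ 0, Q x := by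
  unfold renyiD
  rw [if_pos rfl, EReal.neg_le, ← EReal.coe_neg, le_elog2_iff]

lemma le_renyiD_zero_iff [Fintype X] (P Q : X → ℝ≥0∞) (e : ℝ) :
    (e : EReal) ≤ renyiD 0 P Q ↔
      ∑ x ∈ Finset.univ.filter fun x => P x ≠ 0, Q x ≤ ENNReal.ofReal ((2:ℝ) ^ (-e)) := by
  unfold renyiD
  rw [if_pos rfl, EReal.le_neg, ← EReal.coe_neg, elog2_le_iff]

lemma renyiD_top_le_iff [Fintype X] (P Q : X → ℝ≥0∞) (e : ℝ) :
    renyiD ⊤ P Q ≤ (e : EReal) ↔ ∀ x, P x ≤ ENNReal.ofReal ((2:ℝ) ^ e) * Q x := by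
  have h2t : (0:ℝ) < 2 ^ e := by positivity
  unfold renyiD
  rw [if_neg ENNReal.top_ne_zero, if_neg ENNReal.top_ne_one, if_pos rfl, elog2_le_iff, iSup_le_iff]
  refine forall_congr' fun x => ?_
  rw [ENNReal.div_le_iff_le_mul]
  · right; exact ENNReal.ofReal_ne_top
  · right; simpa using h2t

lemma renyiD_one_term {p q : ℝ≥0∞} (hp : p ≠ ⊤) (hq : q ≠ ⊤) (h : p ≠ 0 → q ≠ 0) :
    ((p.toReal : ℝ) : EReal) * elog2 (p / q) =
      ((p.toReal * Real.logb 2 (p.toReal / q.toReal) : ℝ) : EReal) := by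
  by_cases h0 : p = 0
  · simp [h0]
  · have hq0 := h h0
    unfold elog2
    rw [if_neg, if_neg, ENNReal.toReal_div, EReal.coe_mul]
    · exact ENNReal.div_ne_top hp hq0
    · exact (ENNReal.div_pos h0 hq).ne'

lemma ereal_coe_sum {ι : Type*} (s : Finset ι) (f : ι → ℝ) :
    ((∑ i ∈ s, f i : ℝ) : EReal) = ∑ i ∈ s, (f i : EReal) := by
  induction s using Finset.induction_on with
  | empty => simp
  | insert a s ha ih => rw [Finset.sum_insert ha, Finset.sum_insert ha, EReal.coe_add, ih]

lemma renyiD_one_eq [Fintype X] (P Q : X → ℝ≥0∞) (hP : ∀ x, P x ≠ ⊤) (hQ : ∀ x, Q x ≠ ⊤)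
    (h : ∀ x, P x ≠ 0 → Q x ≠ 0) :
    renyiD 1 P Q = ((∑ x, (P x).toReal * Real.logb 2 ((P x).toReal / (Q x).toReal) : ℝ) : EReal) := by
  unfold renyiD
  rw [if_neg one_ne_zero, if_pos rfl, ereal_coe_sum]
  exact Finset.sum_congr rfl fun x _ => renyiD_one_term (hP x) (hQ x) (h x)

lemma ereal_sum_ne_bot {ι : Type*} (s : Finset ι) (f : ι → EReal) (h : ∀ i ∈ s, f i ≠ ⊥) :
    ∑ i ∈ s, f i ≠ ⊥ := by
  induction s using Finset.induction_on with
  | empty => simp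
  | insert a s ha ih =>
    rw [Finset.sum_insert ha]
    rw [Ne, EReal.add_eq_bot_iff, not_or]
    exact ⟨h a (by simp), ih fun i hi => h i (by simp [hi])⟩

lemma renyiD_one_top [Fintype X] (P Q : X → ℝ≥0∞) (hP : ∀ x, P x ≠ ⊤) (hQ : ∀ x, Q x ≠ ⊤)
    (h : ¬ ∀ x, P x ≠ 0 → Q x ≠ 0) : renyiD 1 P Q = ⊤ := by
  push Not at h
  obtain ⟨x0, h0, h1⟩ := h
  unfold renyiD
  rw [if_neg one_ne_zero, if_pos rfl, ← Finset.add_sum_erase _ _ (Finset.mem_univ x0)]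
  have : ((P x0).toReal : EReal) * elog2 (P x0 / Q x0) = ⊤ := by
    rw [h1, ENNReal.div_zero h0]
    unfold elog2
    rw [if_neg ENNReal.top_ne_zero, if_pos rfl]
    exact EReal.coe_mul_top_of_pos (ENNReal.toReal_pos h0 (hP x0))
  rw [this]
  apply EReal.top_add_of_ne_bot
  apply ereal_sum_ne_bot
  intro i _
  by_cases hi : P i ≠ 0 ∧ Q i = 0
  · rw [hi.2, ENNReal.div_zero hi.1]
    unfold elog2
    rw [if_neg ENNReal.top_ne_zero, if_pos rfl,
      EReal.coe_mul_top_of_pos (ENNReal.toReal_pos hi.1 (hP i))]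
    simp
  · rw [renyiD_one_term (hP i) (hQ i) (by tauto)]
    exact EReal.coe_ne_bot _

lemma renyiD_one_le_iff [Fintype X] (P Q : X → ℝ≥0∞) (hP : ∀ x, P x ≠ ⊤) (hQ : ∀ x, Q x ≠ ⊤)
    (e : ℝ) : renyiD 1 P Q ≤ (e : EReal) ↔ (∀ x, P x ≠ 0 → Q x ≠ 0) ∧
      ∑ x, (P x).toReal * Real.logb 2 ((P x).toReal / (Q x).toReal) ≤ e := by
  by_cases h : ∀ x, P x ≠ 0 → Q x ≠ 0
  · rw [renyiD_one_eq P Q hP hQ h, EReal.coe_le_coe_iff]; tauto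
  · rw [renyiD_one_top P Q hP hQ h]
    simp only [top_le_iff, EReal.coe_ne_top, false_iff]; tauto

lemma IsDist.ne_top [Fintype X] {P : X → ℝ≥0∞} (h : IsDist P) (x : X) : P x ≠ ⊤ := by
  have : P x ≤ 1 := h ▸ Finset.single_le_sum (f := P) (fun _ _ => zero_le) (Finset.mem_univ x)
  exact (this.trans_lt ENNReal.one_lt_top).ne

lemma IsDist.sum_toReal [Fintype X] {P : X → ℝ≥0∞} (h : IsDist P) : ∑ x, (P x).toReal = 1 := by
  rw [← ENNReal.toReal_sum fun x _ => h.ne_top x, h]; rfl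

/-- sum of products over all words -/
lemma sum_prod_words {ι R : Type*} [Fintype ι] [CommSemiring R] (n : ℕ) (f : Fin n → ι → R) :
    ∑ k : Fin n → ι, ∏ i, f i (k i) = ∏ i, ∑ y, f i y := by
  rw [Finset.prod_univ_sum]; simp

lemma sum_sum_prod_words {R : Type*} [Fintype X] [Fintype Y] [CommSemiring R] (n : ℕ)
    (f : X → Y → R) :
    ∑ xs : Fin n → X, ∑ ys : Fin n → Y, ∏ i, f (xs i) (ys i) = (∑ x, ∑ y, f x y) ^ n := by
  rw [Fintype.sum_pow]
  refine Finset.sum_congr rfl fun xs _ => ?_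
  rw [sum_prod_words n fun i y => f (xs i) y]

lemma prodCh_isChannel [Fintype X] [Fintype Y] {W : X → Y → ℝ≥0∞} (hW : IsChannel W) (n : ℕ) :
    IsChannel (prodCh n W) := by
  intro xs
  unfold prodCh
  rw [sum_prod_words n fun i y => W (xs i) y]
  exact Finset.prod_eq_one fun i _ => hW _

lemma prodDist_isDist [Fintype X] {P : X → ℝ≥0∞} (hP : IsDist P) (n : ℕ) :
    IsDist (prodDist n P) := by
  unfold IsDist prodDist
  rw [← Fintype.sum_pow, hP, one_pow]


lemma le_coe_mul_iff_neg {k e : ℝ} (hk : k < 0) (z : EReal) :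
    (e : EReal) ≤ ((k⁻¹ : ℝ) : EReal) * z ↔ z ≤ ((k * e : ℝ) : EReal) := by
  have hk' : k⁻¹ < 0 := inv_lt_zero.2 hk
  induction z with
  | bot => simp [EReal.coe_mul_bot_of_neg hk']
  | top => simp only [EReal.coe_mul_top_of_neg hk', top_le_iff, EReal.coe_ne_top, le_bot_iff,
      EReal.coe_ne_bot]
  | coe z =>
    rw [← EReal.coe_mul, EReal.coe_le_coe_iff, EReal.coe_le_coe_iff]
    constructor
    · intro h
      have := mul_le_mul_of_nonpos_left h hk.le
      rwa [mul_inv_cancel_left₀ hk.ne] at this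
    · intro h
      have := mul_le_mul_of_nonpos_left h hk'.le
      rwa [inv_mul_cancel_left₀ hk.ne] at this

lemma le_renyiD_lt_iff [Fintype X] {α : ℝ≥0∞} (h0 : 0 < α) (h1 : α < 1) (P Q : X → ℝ≥0∞)
    (e : ℝ) : (e : EReal) ≤ renyiD α P Q ↔
      ∑ x, P x ^ α.toReal * Q x ^ (1 - α.toReal) ≤
        ENNReal.ofReal ((2:ℝ) ^ ((α.toReal - 1) * e)) := by
  have h3 := toReal_lt h1
  have h2 : α ≠ ⊤ := (h1.trans ENNReal.one_lt_top).ne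
  unfold renyiD
  rw [if_neg h0.ne', if_neg h1.ne, if_neg h2, le_coe_mul_iff_neg (by linarith), elog2_le_iff]

/-- tangent inequality -/
lemma rpow_tangent {p q : ℝ} (hp : 0 ≤ p) (hq : 0 ≤ q) (h : p ≠ 0 → q ≠ 0) (a : ℝ) :
    p - (1 - a) * Real.log 2 * (p * Real.logb 2 (p / q)) ≤ p ^ a * q ^ (1 - a) := by
  rcases hp.eq_or_lt with h0 | h0
  · rw [← h0]; simp; positivity
  · have hq0 : 0 < q := lt_of_le_of_ne hq (h h0.ne').symm
    have hl : Real.log 2 ≠ 0 := (Real.log_pos (by norm_num)).ne'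
    have e1 : p ^ a * q ^ (1 - a) = p * Real.exp ((1 - a) * (Real.log q - Real.log p)) := by
      rw [Real.rpow_def_of_pos h0, Real.rpow_def_of_pos hq0]
      conv_rhs => rw [← Real.exp_log h0]
      rw [← Real.exp_add, ← Real.exp_add]
      congr 1
      rw [Real.exp_log h0]; ring
    rw [e1, Real.logb, Real.log_div h0.ne' hq0.ne']
    have := Real.add_one_le_exp ((1 - a) * (Real.log q - Real.log p))
    calc _ = p * ((1 - a) * (Real.log q - Real.log p) + 1) := by field_simp; ring
      _ ≤ _ := by gcongr

lemma ennreal_rpow_term {P Q : ℝ≥0∞} (hP : P ≠ ⊤) (hQ : Q ≠ ⊤) {a : ℝ} (ha : 0 < a)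
    (h : a ≤ 1 ∨ (P ≠ 0 → Q ≠ 0)) :
    P ^ a * Q ^ (1 - a) = ENNReal.ofReal (P.toReal ^ a * Q.toReal ^ (1 - a)) := by
  by_cases h0 : P = 0
  · subst h0
    rw [ENNReal.zero_rpow_of_pos ha]
    simp [Real.zero_rpow ha.ne']
  rw [ENNReal.ofReal_mul (by positivity), ENNReal.toReal_rpow, ENNReal.toReal_rpow,
    ENNReal.ofReal_toReal, ENNReal.ofReal_toReal]
  · rcases h with h | h
    · exact ENNReal.rpow_ne_top_of_nonneg (by linarith) hQ
    · exact ENNReal.rpow_ne_top_of_ne_zero (h h0) hQ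
  · exact ENNReal.rpow_ne_top_of_nonneg ha.le hP

lemma sum_rpow_eq [Fintype X] {P Q : X → ℝ≥0∞} (hP : ∀ x, P x ≠ ⊤) (hQ : ∀ x, Q x ≠ ⊤) {a : ℝ}
    (ha : 0 < a) (h : a ≤ 1 ∨ ∀ x, (P x ≠ 0 → Q x ≠ 0)) :
    ∑ x, P x ^ a * Q x ^ (1 - a) =
      ENNReal.ofReal (∑ x, (P x).toReal ^ a * (Q x).toReal ^ (1 - a)) := by
  rw [ENNReal.ofReal_sum_of_nonneg fun x _ => by positivity]
  exact Finset.sum_congr rfl fun x _ => ennreal_rpow_term (hP x) (hQ x) ha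
    (h.imp id fun h => h x)

lemma supp_of_sum_ne_top [Fintype X] {P Q : X → ℝ≥0∞} {a : ℝ}
    (ha : 1 < a) (h : ∑ x, P x ^ a * Q x ^ (1 - a) ≠ ⊤) (hP : ∀ x, P x ≠ ⊤) :
    ∀ x, P x ≠ 0 → Q x ≠ 0 := by
  intro x hx hQ
  apply h
  rw [ENNReal.sum_eq_top]
  refine ⟨x, Finset.mem_univ x, ?_⟩
  rw [hQ, ENNReal.zero_rpow_of_neg (by linarith)]
  exact ENNReal.mul_top (ENNReal.rpow_pos (pos_iff_ne_zero.2 hx) (hP x)).ne'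

lemma D1_nonneg_real [Fintype X] {p q : X → ℝ} (hp : ∀ x, 0 ≤ p x) (hq : ∀ x, 0 ≤ q x)
    (h : ∀ x, p x ≠ 0 → q x ≠ 0) (hp1 : ∑ x, p x = 1) (hq1 : ∑ x, q x ≤ 1) :
    0 ≤ ∑ x, p x * Real.logb 2 (p x / q x) := by
  have hl : 0 < Real.log 2 := Real.log_pos (by norm_num)
  have : ∀ x, p x - Real.log 2 * (p x * Real.logb 2 (p x / q x)) ≤ q x := fun x => by
    have := rpow_tangent (hp x) (hq x) (h x) 0
    simpa using this
  have h2 := Finset.sum_le_sum fun x (_ : x ∈ Finset.univ) => this x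
  rw [Finset.sum_sub_distrib, ← Finset.mul_sum, hp1] at h2
  by_contra hc
  push Not at hc
  nlinarith

lemma toReal_supp {P Q : ℝ≥0∞} (hQ : Q ≠ ⊤) (h : P ≠ 0 → Q ≠ 0) :
    P.toReal ≠ 0 → Q.toReal ≠ 0 := by
  intro h1
  have : P ≠ 0 := by rintro rfl; simp at h1
  exact ENNReal.toReal_ne_zero.2 ⟨h this, hQ⟩

lemma renyiD_nonneg [Fintype X] (α : ℝ≥0∞) {P Q : X → ℝ≥0∞} (hP : IsDist P) (hQ : IsDist Q) :
    0 ≤ renyiD α P Q := by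
  have key1 : 0 ≤ renyiD 1 P Q := by
    by_cases h : ∀ x, P x ≠ 0 → Q x ≠ 0
    · rw [renyiD_one_eq P Q hP.ne_top hQ.ne_top h]
      exact_mod_cast D1_nonneg_real (fun x => ENNReal.toReal_nonneg) (fun x => ENNReal.toReal_nonneg)
        (fun x => toReal_supp (hQ.ne_top x) (h x)) hP.sum_toReal hQ.sum_toReal.le
    · rw [renyiD_one_top P Q hP.ne_top hQ.ne_top h]; simp
  rcases eq_or_ne α 0 with rfl | h0
  · rw [← EReal.coe_zero, le_renyiD_zero_iff]
    simp only [neg_zero, Real.rpow_zero, ENNReal.ofReal_one]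
    rw [← hQ]
    exact Finset.sum_le_sum_of_subset (Finset.filter_subset _ _)
  rcases eq_or_ne α ⊤ with rfl | ht
  · refine le_of_forall_gt_imp_ge_of_dense fun z hz => ?_
    induction z with
    | bot => simp at hz
    | top => simp
    | coe e =>
      have h := (renyiD_top_le_iff P Q e).1 hz.le
      have h2 := Finset.sum_le_sum fun x (_ : x ∈ Finset.univ) => h x
      rw [← Finset.mul_sum, hP, hQ, mul_one] at h2
      have h3 : (1:ℝ) ≤ 2 ^ e := by
        rw [← ENNReal.ofReal_one] at h2
        exact (ENNReal.ofReal_le_ofReal_iff (by positivity)).1 h2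
      have h4 : 0 ≤ e := by
        by_contra hc
        push Not at hc
        have := Real.rpow_lt_one_of_one_lt_of_neg (x := 2) (by norm_num) hc
        linarith
      exact_mod_cast h4
  rcases lt_trichotomy α 1 with h1 | h1 | h1
  · have h3 := toReal_lt h1
    have h4 : 0 < α.toReal := ENNReal.toReal_pos h0 ht
    rw [← EReal.coe_zero, le_renyiD_lt_iff (pos_iff_ne_zero.2 h0) h1,
      sum_rpow_eq hP.ne_top hQ.ne_top h4 (Or.inl h3.le)]
    apply ENNReal.ofReal_le_ofReal
    simp only [mul_zero, Real.rpow_zero]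
    calc _ ≤ ∑ x, (α.toReal * (P x).toReal + (1 - α.toReal) * (Q x).toReal) := by
          refine Finset.sum_le_sum fun x _ => ?_
          exact Real.geom_mean_le_arith_mean2_weighted h4.le (by linarith) (by positivity)
            (by positivity) (by ring)
      _ = 1 := by
          rw [Finset.sum_add_distrib, ← Finset.mul_sum, ← Finset.mul_sum, hP.sum_toReal,
            hQ.sum_toReal]; ring
  · rw [h1]; exact key1
  · have h3 := toReal_gt h1 ht
    rw [← EReal.coe_zero, le_renyiD_gt_iff h1 ht]
    simp only [mul_zero, Real.rpow_zero]
    by_cases hs : ∑ x, P x ^ α.toReal * Q x ^ (1 - α.toReal) = ⊤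
    · rw [hs]; simp
    have hsupp := supp_of_sum_ne_top h3 hs hP.ne_top
    rw [sum_rpow_eq hP.ne_top hQ.ne_top (by linarith) (Or.inr hsupp)]
    apply ENNReal.ofReal_le_ofReal
    rw [renyiD_one_eq P Q hP.ne_top hQ.ne_top hsupp] at key1
    have key2 : 0 ≤ ∑ x, (P x).toReal * Real.logb 2 ((P x).toReal / (Q x).toReal) := by
      exact_mod_cast key1
    have h5 := Finset.sum_le_sum fun x (_ : x ∈ Finset.univ) =>
      rpow_tangent (p := (P x).toReal) (q := (Q x).toReal) (by positivity) (by positivity)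
        (toReal_supp (hQ.ne_top x) (hsupp x)) α.toReal
    rw [Finset.sum_sub_distrib, ← Finset.mul_sum, hP.sum_toReal] at h5
    have hl : 0 < Real.log 2 := Real.log_pos (by norm_num)
    have : 0 ≤ (α.toReal - 1) * Real.log 2 *
      ∑ x, (P x).toReal * Real.logb 2 ((P x).toReal / (Q x).toReal) :=
      mul_nonneg (mul_nonneg (by linarith) hl.le) key2
    linarith

lemma one_of_gt [Fintype X] {P Q : X → ℝ≥0∞} (hP : IsDist P) (hQ : IsDist Q) {b κ : ℝ}
    (hb : 1 < b) (h : ∑ x, P x ^ b * Q x ^ (1 - b) ≤ ENNReal.ofReal (1 + (b - 1) * Real.log 2 * κ))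
    (hκ : 0 ≤ κ) : renyiD 1 P Q ≤ (κ : EReal) := by
  have hs := supp_of_sum_ne_top hb (ne_top_of_le_ne_top ENNReal.ofReal_ne_top h) hP.ne_top
  have hl : 0 < Real.log 2 := Real.log_pos (by norm_num)
  have hb' : 0 < b - 1 := by linarith
  rw [sum_rpow_eq hP.ne_top hQ.ne_top (by linarith) (Or.inr hs),
    ENNReal.ofReal_le_ofReal_iff (by positivity)] at h
  rw [renyiD_one_le_iff P Q hP.ne_top hQ.ne_top]
  refine ⟨hs, ?_⟩
  have h5 := Finset.sum_le_sum fun x (_ : x ∈ Finset.univ) =>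
      rpow_tangent (p := (P x).toReal) (q := (Q x).toReal) (by positivity) (by positivity)
        (toReal_supp (hQ.ne_top x) (hs x)) b
  rw [Finset.sum_sub_distrib, ← Finset.mul_sum, hP.sum_toReal] at h5
  have h6 := h5.trans h
  have : (b - 1) * Real.log 2 * ∑ x, (P x).toReal * Real.logb 2 ((P x).toReal / (Q x).toReal) ≤
    (b - 1) * Real.log 2 * κ := by linarith
  exact le_of_mul_le_mul_left this (by positivity)

lemma lt_of_one [Fintype X] {P Q : X → ℝ≥0∞} (hP : IsDist P) (hQ : IsDist Q) {a κ : ℝ}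
    (ha : 0 < a) (ha1 : a < 1) (h : renyiD 1 P Q ≤ (κ : EReal)) :
    1 - (1 - a) * Real.log 2 * κ ≤ ∑ x, (P x).toReal ^ a * (Q x).toReal ^ (1 - a) := by
  rw [renyiD_one_le_iff P Q hP.ne_top hQ.ne_top] at h
  have h5 := Finset.sum_le_sum fun x (_ : x ∈ Finset.univ) =>
      rpow_tangent (p := (P x).toReal) (q := (Q x).toReal) (by positivity) (by positivity)
        (toReal_supp (hQ.ne_top x) (h.1 x)) a
  rw [Finset.sum_sub_distrib, ← Finset.mul_sum, hP.sum_toReal] at h5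
  have hl : 0 < Real.log 2 := Real.log_pos (by norm_num)
  have : (1 - a) * Real.log 2 * ∑ x, (P x).toReal * Real.logb 2 ((P x).toReal / (Q x).toReal) ≤
    (1 - a) * Real.log 2 * κ := mul_le_mul_of_nonneg_left h.2
      (mul_nonneg (by linarith) hl.le)
  linarith

/-- closeness in order `b > 1` implies closeness in every order `0 < α ≤ 1` -/
lemma close_of_gt {α : ℝ≥0∞} (h0 : 0 < α) (h1 : α ≤ 1) {b ε : ℝ} (hb : 1 < b) (hε : 0 < ε) :
    ∃ κ : ℝ, 0 < κ ∧ ∀ (Z : Type*) [Fintype Z] (P Q : Z → ℝ≥0∞), IsDist P → IsDist Q →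
      ∑ x, P x ^ b * Q x ^ (1 - b) ≤ ENNReal.ofReal (1 + κ) → renyiD α P Q ≤ (ε : EReal) := by
  have hl : 0 < Real.log 2 := Real.log_pos (by norm_num)
  have hb' : 0 < b - 1 := by linarith
  rcases h1.eq_or_lt with rfl | h1
  · exact ⟨(b - 1) * Real.log 2 * ε, by positivity, fun Z _ P Q hP hQ h =>
      one_of_gt hP hQ hb h hε.le⟩
  · have h3 := toReal_lt h1
    have h4 : 0 < α.toReal := ENNReal.toReal_pos h0.ne' (h1.trans ENNReal.one_lt_top).ne
    have h5 : (2:ℝ) ^ ((α.toReal - 1) * ε) < 1 :=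
      Real.rpow_lt_one_of_one_lt_of_neg (by norm_num) (mul_neg_of_neg_of_pos (by linarith) hε)
    have h6 : 0 < 1 - α.toReal := by linarith
    set e := (1 - (2:ℝ) ^ ((α.toReal - 1) * ε)) / ((1 - α.toReal) * Real.log 2) with he
    have he0 : 0 < e := div_pos (by linarith) (by positivity)
    refine ⟨(b - 1) * Real.log 2 * e, by positivity, fun Z _ P Q hP hQ h => ?_⟩
    have h7 := lt_of_one hP hQ h4 h3 (one_of_gt hP hQ hb h he0.le)
    rw [renyiD_lt_le_iff h0 h1, sum_rpow_eq hP.ne_top hQ.ne_top h4 (Or.inl h3.le)]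
    apply ENNReal.ofReal_le_ofReal
    have h8 : (1 - α.toReal) * Real.log 2 * e = 1 - (2:ℝ) ^ ((α.toReal - 1) * ε) := by
      rw [he]; field_simp
    linarith


lemma IsSimulation.isChannel [Fintype X] [Fintype Y] {c : ℝ} {N : X → Y → ℝ≥0∞}
    (h : IsSimulation c N) : IsChannel N := by
  obtain ⟨m, M, PK, E, D, hM, hc, hPK, hE, hD, hN⟩ := h
  intro x
  calc ∑ y, N x y = ∑ y, ∑ k, ∑ j, PK k * E x k j * D j k y := by simp_rw [hN]
    _ = ∑ k, ∑ j, PK k * E x k j * ∑ y, D j k y := by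
        rw [Finset.sum_comm]
        refine Finset.sum_congr rfl fun k _ => ?_
        rw [Finset.sum_comm]
        simp_rw [Finset.mul_sum]
    _ = 1 := by
        simp_rw [hD, mul_one, ← Finset.mul_sum, hE, mul_one]; exact hPK

lemma IsSimulation.bound [Fintype X] [Fintype Y] {c : ℝ} {N : X → Y → ℝ≥0∞}
    (h : IsSimulation c N) : ∃ Q : Y → ℝ≥0∞, IsDist Q ∧
      ∀ x y, N x y ≤ ENNReal.ofReal ((2:ℝ) ^ c) * Q y := by
  obtain ⟨m, M, PK, E, D, hM, hc, hPK, hE, hD, hN⟩ := h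
  have hM0 : (M : ℝ≥0∞) ≠ 0 := by exact_mod_cast hM.ne'
  have hMt : (M : ℝ≥0∞) ≠ ⊤ := ENNReal.natCast_ne_top M
  have hMc : (M : ℝ≥0∞) ≤ ENNReal.ofReal ((2:ℝ) ^ c) := by
    rw [Real.logb_le_iff_le_rpow (by norm_num) (by exact_mod_cast hM)] at hc
    calc (M : ℝ≥0∞) = ENNReal.ofReal (M : ℝ) := by simp
      _ ≤ _ := ENNReal.ofReal_le_ofReal hc
  refine ⟨fun y => (M : ℝ≥0∞)⁻¹ * ∑ k, ∑ j, PK k * D j k y, ?_, fun x y => ?_⟩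
  · unfold IsDist
    rw [← Finset.mul_sum]
    have : ∑ y, ∑ k, ∑ j, PK k * D j k y = M := by
      rw [Finset.sum_comm]
      calc ∑ k, ∑ y, ∑ j, PK k * D j k y = ∑ k, PK k * M := by
            refine Finset.sum_congr rfl fun k _ => ?_
            rw [Finset.sum_comm]
            simp_rw [← Finset.mul_sum, hD]
            simp
        _ = M := by rw [← Finset.sum_mul, hPK, one_mul]
    rw [this, ENNReal.inv_mul_cancel hM0 hMt]
  · calc N x y = ∑ k, ∑ j, PK k * E x k j * D j k y := hN x y
      _ ≤ ∑ k, ∑ j, PK k * D j k y := by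
          refine Finset.sum_le_sum fun k _ => Finset.sum_le_sum fun j _ => ?_
          have : E x k j ≤ 1 := hE x k ▸
            Finset.single_le_sum (f := E x k) (fun _ _ => zero_le) (Finset.mem_univ j)
          gcongr
          exact mul_le_of_le_one_right' this
      _ = M * ((M : ℝ≥0∞)⁻¹ * ∑ k, ∑ j, PK k * D j k y) := by
          rw [← mul_assoc, ENNReal.mul_inv_cancel hM0 hMt, one_mul]
      _ ≤ _ := by gcongr

lemma simD_nonneg [Fintype X] [Fintype Y] [Nonempty X] (α : ℝ≥0∞) {W : X → Y → ℝ≥0∞}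
    (hW : IsChannel W) (c : ℝ) : 0 ≤ simD α W c := by
  refine le_iInf fun N => ?_
  obtain ⟨x⟩ := ‹Nonempty X›
  exact (renyiD_nonneg α (hW x) (N.2.isChannel x)).trans
    (le_iSup (fun x => renyiD α (W x) (N.1 x)) x)

lemma Rrst_le [Fintype X] [Fintype Y] [Nonempty X] (α : ℝ≥0∞) {W : X → Y → ℝ≥0∞}
    (hW : IsChannel W) {r : ℝ} (hr : 0 ≤ r)
    (h : ∀ ε : ℝ, 0 < ε → ∀ᶠ n : ℕ in atTop, ∃ N, IsSimulation (n * r) N ∧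
      ∀ x, renyiD α (prodCh n W x) (N x) ≤ (ε : EReal)) : Rrst α W ≤ (r : EReal) := by
  have h1 : Filter.limsup (fun n : ℕ => simD α (prodCh n W) (n * r)) Filter.atTop = 0 := by
    apply le_antisymm
    · refine le_of_forall_gt_imp_ge_of_dense fun z hz => ?_
      induction z with
      | bot => simp at hz
      | top => simp
      | coe e =>
        have he : 0 < e := by exact_mod_cast hz
        refine Filter.limsup_le_of_le (by isBoundedDefault) ?_
        filter_upwards [h e he] with n hn
        obtain ⟨N, hN, hx⟩ := hn
        exact (iInf_le _ (⟨N, hN⟩ : {N // IsSimulation (n * r) N})).trans (iSup_le hx)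
    · refine Filter.le_limsup_of_frequently_le ?_ (by isBoundedDefault)
      exact Frequently.of_forall fun n => simD_nonneg α (prodCh_isChannel hW n) _
  refine (iInf_le _ (⟨fun n => n * r, fun n => by positivity, h1⟩ :
    {c : ℕ → ℝ // (∀ n, 0 ≤ c n) ∧
      Filter.limsup (fun n : ℕ => simD α (prodCh n W) (c n)) Filter.atTop = 0})).trans ?_
  refine Filter.limsup_le_of_le (by isBoundedDefault) ?_
  filter_upwards [Filter.eventually_gt_atTop 0] with n hn
  have : (n : ℝ) ≠ 0 := by exact_mod_cast hn.ne'
  show (((n : ℝ) * r / n : ℝ) : EReal) ≤ r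
  rw [mul_div_cancel_left₀ _ this]

lemma le_Rrst [Fintype X] [Fintype Y] (α : ℝ≥0∞) {W : X → Y → ℝ≥0∞} {v : ℝ}
    (h : ∀ δ : ℝ, 0 < δ → ∃ ε : ℝ, 0 < ε ∧ ∃ C : ℝ, ∀ᶠ n : ℕ in atTop, ∀ c : ℝ, ∀ N,
      IsSimulation c N → (∀ x, renyiD α (prodCh n W x) (N x) ≤ (ε : EReal)) →
      n * (v - δ) ≤ c + C) : (v : EReal) ≤ Rrst α W := by
  refine le_iInf fun c => ?_
  refine le_of_forall_lt_imp_le_of_dense fun z hz => ?_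
  induction z with
  | bot => simp
  | top => simp at hz
  | coe z =>
    have hz' : z < v := by exact_mod_cast hz
    obtain ⟨ε, hε, C, hC⟩ := h ((v - z) / 2) (by linarith)
    have h1 : ∀ᶠ n in atTop, simD α (prodCh n W) (c.1 n) < (ε : EReal) := by
      apply Filter.eventually_lt_of_limsup_lt
      · rw [c.2.2]; exact_mod_cast hε
      · isBoundedDefault
    obtain ⟨n0, hn0⟩ := exists_nat_gt (2 * C / (v - z))
    refine Filter.le_limsup_of_frequently_le (Eventually.frequently ?_) (by isBoundedDefault)
    filter_upwards [hC, h1, Filter.eventually_gt_atTop 0, Filter.eventually_ge_atTop n0]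
      with n hC h1 hn hn1
    obtain ⟨N, hN⟩ := iInf_lt_iff.1 h1
    have h2 := hC (c.1 n) N.1 N.2 fun x =>
      (le_iSup (fun x => renyiD α (prodCh n W x) (N.1 x)) x).trans hN.le
    have hn' : (0:ℝ) < n := by exact_mod_cast hn
    have hn1' : (n0:ℝ) ≤ n := by exact_mod_cast hn1
    rw [EReal.coe_le_coe_iff, le_div_iff₀ hn']
    rw [div_lt_iff₀ (by linarith)] at hn0
    have : (n0:ℝ) * (v - z) ≤ n * (v - z) := by
      apply mul_le_mul_of_nonneg_right hn1'; linarith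
    linarith


/-- the power of two `2 ^ t` as an extended nonnegative real -/
def p2 (t : ℝ) : ℝ≥0∞ := ENNReal.ofReal ((2:ℝ) ^ t)

lemma p2_pos (t : ℝ) : 0 < p2 t := by unfold p2; simp; positivity
lemma p2_ne_zero (t : ℝ) : p2 t ≠ 0 := (p2_pos t).ne'
lemma p2_ne_top (t : ℝ) : p2 t ≠ ⊤ := ENNReal.ofReal_ne_top
lemma p2_add (a b : ℝ) : p2 (a + b) = p2 a * p2 b := by
  unfold p2; rw [Real.rpow_add (by norm_num), ENNReal.ofReal_mul (by positivity)]
lemma p2_rpow (a b : ℝ) : p2 a ^ b = p2 (a * b) := by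
  unfold p2; rw [ENNReal.ofReal_rpow_of_pos (by positivity), Real.rpow_mul (by norm_num)]
lemma p2_pow (a : ℝ) (n : ℕ) : p2 a ^ n = p2 (n * a) := by
  rw [← ENNReal.rpow_natCast, p2_rpow, mul_comm]
lemma p2_zero : p2 0 = 1 := by unfold p2; simp
lemma p2_le_iff {a b : ℝ} : p2 a ≤ p2 b ↔ a ≤ b := by
  unfold p2
  rw [ENNReal.ofReal_le_ofReal_iff (by positivity), Real.rpow_le_rpow_left_iff (by norm_num)]
lemma p2_exists {S : ℝ≥0∞} (h0 : S ≠ 0) (ht : S ≠ ⊤) : ∃ v, S = p2 v := by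
  refine ⟨Real.logb 2 S.toReal, ?_⟩
  unfold p2
  rw [Real.rpow_logb (by norm_num) (by norm_num) (ENNReal.toReal_pos h0 ht),
    ENNReal.ofReal_toReal ht]

lemma margX_joint [Fintype X] [Fintype Y] {W : X → Y → ℝ≥0∞} (hW : IsChannel W)
    (P : X → ℝ≥0∞) : margX (joint P W) = P := by
  funext x
  unfold margX joint
  simp only
  rw [← Finset.mul_sum, hW, mul_one]

lemma renyiMI_le [Fintype X] [Fintype Y] {W : X → Y → ℝ≥0∞} (hW : IsChannel W) (α : ℝ≥0∞)
    (P : X → ℝ≥0∞) {Q : Y → ℝ≥0∞} (hQ : IsDist Q) :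
    renyiMI α (joint P W) ≤ renyiD α (joint P W) fun p => P p.1 * Q p.2 := by
  unfold renyiMI
  rw [margX_joint hW P]
  exact iInf_le (fun Q : {Q : Y → ℝ≥0∞ // IsDist Q} =>
    renyiD α (joint P W) fun p => P p.1 * Q.1 p.2) ⟨Q, hQ⟩

lemma IsChannel.ne_top [Fintype X] [Fintype Y] {W : X → Y → ℝ≥0∞} (hW : IsChannel W) (x : X)
    (y : Y) : W x y ≠ ⊤ := IsDist.ne_top (P := W x) (hW x) y

lemma conv_top [Fintype X] [Fintype Y] [Nonempty X] {W : X → Y → ℝ≥0∞} (hW : IsChannel W)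
    (P : X → ℝ≥0∞) : renyiMI ⊤ (joint P W) ≤ Rrst ⊤ W := by
  choose xm hxm using fun y => Finite.exists_max fun x => W x y
  set S := ∑ y, W (xm y) y with hS
  have hSt : S ≠ ⊤ := ENNReal.sum_ne_top.2 fun y _ => hW.ne_top _ _
  have hS0 : S ≠ 0 := by
    obtain ⟨x⟩ := ‹Nonempty X›
    have : 1 ≤ S := hW x ▸ Finset.sum_le_sum fun y _ => hxm y x
    exact (zero_lt_one.trans_le this).ne'
  obtain ⟨v, hv⟩ := p2_exists hS0 hSt
  trans (v : EReal)
  · refine (renyiMI_le hW ⊤ P (Q := fun y => W (xm y) y / S) ?_).trans ?_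
    · unfold IsDist
      simp_rw [div_eq_mul_inv]
      rw [← Finset.sum_mul, ← hS, ENNReal.mul_inv_cancel hS0 hSt]
    · rw [renyiD_top_le_iff]
      rintro ⟨x, y⟩
      show P x * W x y ≤ p2 v * (P x * (W (xm y) y / S))
      rw [← hv, mul_left_comm, ENNReal.mul_div_cancel hS0 hSt]
      gcongr
      exact hxm y x
  · refine le_Rrst ⊤ fun δ hδ => ⟨1, one_pos, 1, Eventually.of_forall fun n c N hN hD => ?_⟩
    obtain ⟨Q, hQ, hNQ⟩ := hN.bound
    have key : S ^ n ≤ p2 1 * p2 c := by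
      calc S ^ n = ∑ ys : Fin n → Y, ∏ i, W (xm (ys i)) (ys i) := by
            rw [hS, Fintype.sum_pow]
        _ ≤ ∑ ys : Fin n → Y, p2 1 * (p2 c * Q ys) := by
            refine Finset.sum_le_sum fun ys _ => ?_
            have h1 := (renyiD_top_le_iff _ _ _).1 (hD fun i => xm (ys i)) ys
            exact h1.trans (mul_le_mul_right (hNQ _ _) _)
        _ = p2 1 * p2 c := by
            rw [← Finset.mul_sum, ← Finset.mul_sum, hQ, mul_one]
    rw [hv, p2_pow, ← p2_add, p2_le_iff] at key
    have : (0:ℝ) ≤ n * δ := by positivity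
    linarith

lemma conv_zero [Fintype X] [Fintype Y] [Nonempty Y] {W : X → Y → ℝ≥0∞}
    (hW : IsChannel W) {P : X → ℝ≥0∞} (hP : IsDist P) : renyiMI 0 (joint P W) ≤ Rrst 0 W := by
  obtain ⟨y0, hy0⟩ := Finite.exists_max fun y => ∑ x, if W x y ≠ 0 then P x else 0
  set h := ∑ x, if W x y0 ≠ 0 then P x else 0 with hh
  have ht : h ≠ ⊤ := ENNReal.sum_ne_top.2 fun x _ => by
    split_ifs
    · exact hP.ne_top x
    · simp
  have h0 : h ≠ 0 := by
    have : ∃ x, P x ≠ 0 := by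
      by_contra hc
      push Not at hc
      have : ∑ x, P x = 0 := by simp [hc]
      rw [hP] at this; simp at this
    obtain ⟨x, hx⟩ := this
    have : ∃ y, W x y ≠ 0 := by
      by_contra hc
      push Not at hc
      have : ∑ y, W x y = 0 := by simp [hc]
      rw [hW] at this; simp at this
    obtain ⟨y, hy⟩ := this
    intro hc
    have h2 := hy0 y
    rw [hc] at h2
    have h3 : P x ≤ ∑ x, if W x y ≠ 0 then P x else 0 := by
      have := Finset.single_le_sum (f := fun x => if W x y ≠ 0 then P x else 0)
        (fun _ _ => zero_le) (Finset.mem_univ x)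
      simpa [hy] using this
    exact hx (le_antisymm (h3.trans h2) zero_le)
  obtain ⟨v, hv⟩ := p2_exists h0 ht
  trans ((-v : ℝ) : EReal)
  · refine (renyiMI_le hW 0 P (Q := fun y => if y = y0 then 1 else 0) ?_).trans ?_
    · unfold IsDist; simp
    · rw [renyiD_zero_le_iff, neg_neg]
      change p2 v ≤ _
      rw [← hv, hh, Finset.sum_filter, Fintype.sum_prod_type]
      refine Finset.sum_le_sum fun x _ => ?_
      have h1 := Finset.single_le_sum (f := fun y => if joint P W (x, y) ≠ 0 then
        P x * (if y = y0 then (1:ℝ≥0∞) else 0) else 0) (fun _ _ => zero_le) (Finset.mem_univ y0)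
      refine le_trans ?_ h1
      unfold joint
      by_cases hx : P x = 0 <;> by_cases hw : W x y0 = 0 <;> simp [hx, hw]
  · refine le_Rrst 0 fun δ hδ => ⟨1, one_pos, 1, Eventually.of_forall fun n c N hN hD => ?_⟩
    obtain ⟨Q, hQ, hNQ⟩ := hN.bound
    have key : p2 (-1) ≤ p2 c * h ^ n := by
      calc p2 (-1) = ∑ xs, prodDist n P xs * p2 (-1) := by
            rw [← Finset.sum_mul, prodDist_isDist hP n, one_mul]
        _ ≤ ∑ xs, prodDist n P xs * ∑ ys, if prodCh n W xs ys ≠ 0 then p2 c * Q ys else 0 := by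
            refine Finset.sum_le_sum fun xs _ => ?_
            gcongr
            have h1 := (renyiD_zero_le_iff _ _ _).1 (hD xs)
            rw [Finset.sum_filter] at h1
            refine h1.trans (Finset.sum_le_sum fun ys _ => ?_)
            split_ifs
            · exact hNQ xs ys
            · simp
        _ = ∑ ys, p2 c * Q ys * ∑ xs : Fin n → X, ∏ i, (if W (xs i) (ys i) ≠ 0 then P (xs i) else 0) := by
            simp_rw [Finset.mul_sum]
            rw [Finset.sum_comm]
            refine Finset.sum_congr rfl fun ys _ => Finset.sum_congr rfl fun xs _ => ?_
            unfold prodCh prodDist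
            by_cases hz : ∏ i, W (xs i) (ys i) = 0
            · rw [if_neg (by simpa using hz)]
              obtain ⟨i, _, hi⟩ := Finset.prod_eq_zero_iff.1 hz
              have h5 : ∏ i, (if W (xs i) (ys i) ≠ 0 then P (xs i) else 0) = 0 :=
                Finset.prod_eq_zero (Finset.mem_univ i) (by simp [hi])
              rw [h5, mul_zero, mul_zero]
            · rw [if_pos hz, mul_comm]
              congr 1
              refine Finset.prod_congr rfl fun i _ => ?_
              rw [if_pos fun hi => hz (Finset.prod_eq_zero (Finset.mem_univ i) hi)]
        _ ≤ ∑ ys, p2 c * Q ys * h ^ n := by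
            refine Finset.sum_le_sum fun ys _ => ?_
            gcongr
            rw [sum_prod_words n fun i x => if W x (ys i) ≠ 0 then P x else 0]
            calc _ ≤ ∏ i : Fin n, h := Finset.prod_le_prod' fun i _ => hy0 (ys i)
              _ = h ^ n := by simp
        _ = p2 c * h ^ n := by
            rw [← Finset.sum_mul, ← Finset.mul_sum, hQ, mul_one]
    rw [hv, p2_pow, ← p2_add, p2_le_iff] at key
    have : (0:ℝ) ≤ n * δ := by positivity
    linarith


lemma p2_inv (a : ℝ) : (p2 a)⁻¹ = p2 (-a) := by
  rw [← ENNReal.rpow_neg_one, p2_rpow]; congr 1; ring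

lemma holder_aux {Z : Type*} [Fintype Z] {G R : Z → ℝ≥0∞} {a : ℝ} (ha : 1 < a)
    (hG : ∀ z, G z ≠ ⊤) (hR : ∀ z, R z ≠ ⊤) {B C : ℝ≥0∞} (hB : B ≠ ⊤)
    (h1 : ∑ z, G z * R z ^ (1 - a) ≤ B) (h2 : ∑ z, R z ≤ C) :
    ∑ z, G z ^ (1 / a) ≤ B ^ (1 / a) * C ^ (1 - 1 / a) := by
  have ha0 : a ≠ 0 := by linarith
  have ha1 : a - 1 ≠ 0 := by linarith
  have hpos : 0 < 1 / a := by positivity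
  have hlt : 1 / a < 1 := by rw [div_lt_one (by linarith)]; exact ha
  have hsupp : ∀ z, G z ≠ 0 → R z ≠ 0 := by
    intro z hz hr
    have : ∑ z, G z * R z ^ (1 - a) = ⊤ := by
      rw [ENNReal.sum_eq_top]
      refine ⟨z, Finset.mem_univ z, ?_⟩
      rw [hr, ENNReal.zero_rpow_of_neg (by linarith), ENNReal.mul_top hz]
    rw [this] at h1
    exact hB (top_le_iff.1 h1)
  calc ∑ z, G z ^ (1 / a)
      ≤ ∑ z, (G z * R z ^ (1 - a)) ^ (1 / a) * R z ^ (1 - 1 / a) := by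
        refine Finset.sum_le_sum fun z _ => ?_
        by_cases hz : G z = 0
        · rw [hz, ENNReal.zero_rpow_of_pos hpos]; exact zero_le
        · obtain ⟨u, hu⟩ := p2_exists hz (hG z)
          obtain ⟨w, hw⟩ := p2_exists (hsupp z hz) (hR z)
          rw [hu, hw, p2_rpow, p2_rpow, ← p2_add, p2_rpow, p2_rpow, ← p2_add, p2_le_iff]
          apply le_of_eq
          field_simp
          ring
    _ ≤ (∑ z, ((G z * R z ^ (1 - a)) ^ (1 / a)) ^ a) ^ (1 / a) *
        (∑ z, (R z ^ (1 - 1 / a)) ^ (a.conjExponent)) ^ (1 / a.conjExponent) :=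
        ENNReal.inner_le_Lp_mul_Lq _ _ _ (Real.HolderConjugate.conjExponent ha)
    _ = (∑ z, G z * R z ^ (1 - a)) ^ (1 / a) * (∑ z, R z) ^ (1 - 1 / a) := by
        have e1 : a.conjExponent = a / (a - 1) := rfl
        have e2 : 1 / a.conjExponent = 1 - 1 / a := by rw [e1]; field_simp
        rw [e2]
        congr 2
        · refine Finset.sum_congr rfl fun z _ => ?_
          rw [← ENNReal.rpow_mul, one_div_mul_cancel ha0, ENNReal.rpow_one]
        · refine Finset.sum_congr rfl fun z _ => ?_
          rw [← ENNReal.rpow_mul, e1]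
          have : (1 - 1 / a) * (a / (a - 1)) = 1 := by field_simp
          rw [this, ENNReal.rpow_one]
    _ ≤ _ := by
        gcongr

lemma rpow_anti {x y : ℝ≥0∞} (h : x ≤ y) {z : ℝ} (hz : 0 ≤ z) : y ^ (-z) ≤ x ^ (-z) := by
  rw [ENNReal.rpow_neg, ENNReal.rpow_neg, ENNReal.inv_le_inv]
  exact ENNReal.rpow_le_rpow h hz

lemma joint_term {P W Q : ℝ≥0∞} (hP : P ≠ ⊤) (hQ : Q ≠ ⊤) (hW : W ≠ ⊤) {a : ℝ}
    (ha : 0 < a) : (P * W) ^ a * (P * Q) ^ (1 - a) = P * (W ^ a * Q ^ (1 - a)) := by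
  by_cases h0 : P = 0
  · rw [h0, zero_mul, zero_mul, zero_mul, ENNReal.zero_rpow_of_pos ha, zero_mul]
  · rw [ENNReal.mul_rpow_of_ne_top hP hW, ENNReal.mul_rpow_of_ne_top hP hQ]
    have : P ^ a * P ^ (1 - a) = P := by
      rw [← ENNReal.rpow_add _ _ h0 hP, add_sub_cancel, ENNReal.rpow_one]
    calc _ = (P ^ a * P ^ (1 - a)) * (W ^ a * Q ^ (1 - a)) := by ring
      _ = _ := by rw [this]

lemma exists_ne_zero_of_sum {Z : Type*} [Fintype Z] {P : Z → ℝ≥0∞} (hP : ∑ z, P z = 1) :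
    ∃ z, P z ≠ 0 := by
  by_contra hc
  push Not at hc
  have : ∑ x, P x = 0 := by simp [hc]
  rw [hP] at this; simp at this

lemma conv_gt [Fintype X] [Fintype Y] {W : X → Y → ℝ≥0∞} (hW : IsChannel W)
    {P : X → ℝ≥0∞} (hP : IsDist P) {α : ℝ≥0∞} (h1 : 1 < α) (ht : α ≠ ⊤) :
    renyiMI α (joint P W) ≤ Rrst α W := by
  have ha := toReal_gt h1 ht
  set a := α.toReal with haa
  have ha0 : a ≠ 0 := by linarith
  have ha1 : a - 1 ≠ 0 := by linarith
  have hpos : 0 < 1 / a := by positivity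
  set g : Y → ℝ≥0∞ := fun y => ∑ x, P x * W x y ^ a with hg
  have hgt : ∀ y, g y ≠ ⊤ := fun y => ENNReal.sum_ne_top.2 fun x _ =>
    ENNReal.mul_ne_top (hP.ne_top x) (ENNReal.rpow_ne_top_of_nonneg (by linarith) (hW.ne_top x y))
  set S := ∑ y, g y ^ (1 / a) with hS
  have hSt : S ≠ ⊤ := ENNReal.sum_ne_top.2 fun y _ =>
    ENNReal.rpow_ne_top_of_nonneg hpos.le (hgt y)
  have hS0 : S ≠ 0 := by
    obtain ⟨x, hx⟩ := exists_ne_zero_of_sum hP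
    obtain ⟨y, hy⟩ := exists_ne_zero_of_sum (hW x)
    have h2 : g y ≠ 0 := by
      intro h
      have := (Finset.sum_eq_zero_iff.1 h) x (Finset.mem_univ x)
      rw [mul_eq_zero, ENNReal.rpow_eq_zero_iff_of_pos (by linarith)] at this
      tauto
    intro h
    have := (Finset.sum_eq_zero_iff.1 h) y (Finset.mem_univ y)
    rw [ENNReal.rpow_eq_zero_iff_of_pos hpos] at this
    exact h2 this
  obtain ⟨v, hv⟩ := p2_exists hS0 hSt
  trans ((a / (a - 1) * v : ℝ) : EReal)
  · have hQd : IsDist fun y => g y ^ (1 / a) / S := by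
      unfold IsDist
      simp_rw [ENNReal.div_eq_inv_mul]
      rw [← Finset.mul_sum, ← hS, ENNReal.inv_mul_cancel hS0 hSt]
    refine (renyiMI_le hW α P hQd).trans ?_
    rw [renyiD_gt_le_iff h1 ht, ← haa]
    change _ ≤ p2 ((a - 1) * (a / (a - 1) * v))
    calc ∑ p : X × Y, (joint P W p) ^ a * (P p.1 * (g p.2 ^ (1 / a) / S)) ^ (1 - a)
        = ∑ y, g y * (g y ^ (1 / a) / S) ^ (1 - a) := by
          rw [Fintype.sum_prod_type, Finset.sum_comm]
          refine Finset.sum_congr rfl fun y _ => ?_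
          rw [hg, Finset.sum_mul]
          refine Finset.sum_congr rfl fun x _ => ?_
          unfold joint
          rw [mul_assoc]
          exact joint_term (hP.ne_top x) (hQd.ne_top y) (hW.ne_top x y) (by linarith)
      _ ≤ ∑ y, g y ^ (1 / a) * p2 ((a - 1) * v) := by
          refine Finset.sum_le_sum fun y _ => ?_
          by_cases hz : g y = 0
          · rw [hz, zero_mul]; exact zero_le
          · obtain ⟨u, hu⟩ := p2_exists hz (hgt y)
            rw [hu, hv, div_eq_mul_inv, p2_inv, p2_rpow, ← p2_add, p2_rpow, ← p2_add, ← p2_add,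
              p2_le_iff]
            apply le_of_eq
            field_simp
            ring
      _ = p2 ((a - 1) * (a / (a - 1) * v)) := by
          rw [← Finset.sum_mul, ← hS, hv, ← p2_add]
          congr 1
          field_simp
          ring
  · refine le_Rrst α fun δ hδ => ⟨1, one_pos, 1, Eventually.of_forall fun n c N hN hD => ?_⟩
    obtain ⟨Q, hQ, hNQ⟩ := hN.bound
    set G : (Fin n → Y) → ℝ≥0∞ := fun ys => ∏ i, g (ys i) with hG
    have hGt : ∀ ys, G ys ≠ ⊤ := fun ys => ENNReal.prod_ne_top fun i _ => hgt _
    have hGe : ∀ ys, G ys = ∑ xs, prodDist n P xs * prodCh n W xs ys ^ a := by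
      intro ys
      rw [hG, hg]
      simp only
      rw [← sum_prod_words n fun i x => P x * W x (ys i) ^ a]
      refine Finset.sum_congr rfl fun xs _ => ?_
      unfold prodDist prodCh
      rw [Finset.prod_mul_distrib, ENNReal.prod_rpow_of_nonneg (by linarith)]
    have hA : ∑ ys, G ys * (p2 c * Q ys) ^ (1 - a) ≤ p2 ((a - 1) * 1) := by
      calc ∑ ys, G ys * (p2 c * Q ys) ^ (1 - a)
          = ∑ xs, prodDist n P xs * ∑ ys, prodCh n W xs ys ^ a * (p2 c * Q ys) ^ (1 - a) := by
            simp_rw [hGe, Finset.sum_mul, Finset.mul_sum]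
            rw [Finset.sum_comm]
            simp_rw [mul_assoc]
        _ ≤ ∑ xs, prodDist n P xs * p2 ((a - 1) * 1) := by
            refine Finset.sum_le_sum fun xs _ => ?_
            gcongr
            refine le_trans ?_ ((renyiD_gt_le_iff h1 ht _ _ _).1 (hD xs))
            refine Finset.sum_le_sum fun ys _ => ?_
            rw [← haa]
            refine mul_le_mul_right ?_ _
            have := rpow_anti (hNQ xs ys) (z := a - 1) (by linarith)
            rwa [neg_sub] at this
        _ = p2 ((a - 1) * 1) := by
            rw [← Finset.sum_mul, prodDist_isDist hP n, one_mul]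
    have hB : ∑ ys, p2 c * Q ys ≤ p2 c := by rw [← Finset.mul_sum, hQ, mul_one]
    have key := holder_aux ha hGt (fun ys => ENNReal.mul_ne_top (p2_ne_top c) (hQ.ne_top ys))
      (p2_ne_top _) hA hB
    have e1 : ∑ ys, G ys ^ (1 / a) = p2 (n * v) := by
      rw [← p2_pow, ← hv, hS, Fintype.sum_pow]
      refine Finset.sum_congr rfl fun ys _ => ?_
      rw [hG, ENNReal.prod_rpow_of_nonneg hpos.le]
    rw [e1, p2_rpow, p2_rpow, ← p2_add, p2_le_iff] at key
    have : (0:ℝ) ≤ n * δ := by positivity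
    have h5 : a / (a - 1) * (n * v) ≤ a / (a - 1) * ((a - 1) * 1 * (1 / a) + c * (1 - 1 / a)) := by
      apply mul_le_mul_of_nonneg_left key
      apply div_nonneg <;> linarith
    have h6 : a / (a - 1) * ((a - 1) * 1 * (1 / a) + c * (1 - 1 / a)) = c + 1 := by
      field_simp; ring
    have h7 : a / (a - 1) * (n * v) = n * (a / (a - 1) * v) := by ring
    linarith


lemma mgf_lemma {ι : Type*} [Fintype ι] (p z : ι → ℝ) (h1 : ∑ i, p i = 1)
    (hz : ∑ i, p i * z i < 0) :
    ∀ᶠ s in nhdsWithin (0:ℝ) (Set.Ioi 0), ∑ i, p i * Real.exp (s * z i) < 1 := by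
  have hd : HasDerivAt (fun s : ℝ => ∑ i, p i * Real.exp (s * z i)) (∑ i, p i * z i) 0 := by
    apply HasDerivAt.fun_sum
    intro i _
    have h := (((hasDerivAt_id (0:ℝ)).mul_const (z i)).exp).const_mul (p i)
    simpa using h
  have ht := hasDerivAt_iff_tendsto_slope.1 hd
  have h2 : ∀ᶠ s in nhdsWithin (0:ℝ) (Set.Ioi 0),
      slope (fun s : ℝ => ∑ i, p i * Real.exp (s * z i)) 0 s < 0 := by
    have := ht.eventually (gt_mem_nhds hz)
    refine this.filter_mono (nhdsWithin_mono _ ?_)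
    intro s hs
    simp only [Set.mem_compl_iff, Set.mem_singleton_iff]
    exact ne_of_gt hs
  filter_upwards [h2, self_mem_nhdsWithin] with s hs hs0
  rw [slope_def_field] at hs
  simp only [zero_mul, Real.exp_zero, mul_one, sub_zero, h1] at hs
  have hs0' : (0:ℝ) < s := hs0
  rw [div_lt_iff₀ hs0'] at hs
  linarith

lemma tang {a : ℝ} (h0 : 0 < a) (h1 : a < 1) :
    ∃ C : ℝ, 0 < C ∧ ∀ w n : ℝ, 0 ≤ w → 0 ≤ n → w ^ a * n ^ (1 - a) ≤ 1 / 4 * w + C * n := by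
  set d : ℝ := (1 / 4 : ℝ) ^ (1 / (1 - a)) with hd
  have hd0 : 0 < d := by positivity
  have h1a : 1 - a ≠ 0 := by linarith
  have hd1 : d ^ (1 - a) = 1 / 4 := by
    rw [hd, ← Real.rpow_mul (by norm_num), one_div_mul_cancel h1a, Real.rpow_one]
  refine ⟨d ^ (-a), by positivity, fun w n hw hn => ?_⟩
  have key := Real.geom_mean_le_arith_mean2_weighted h0.le (by linarith : 0 ≤ 1 - a)
    (by positivity : 0 ≤ d ^ (1 - a) * w) (by positivity : 0 ≤ d ^ (-a) * n) (by ring)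
  have e : (d ^ (1 - a) * w) ^ a * (d ^ (-a) * n) ^ (1 - a) = w ^ a * n ^ (1 - a) := by
    rw [Real.mul_rpow (by positivity) hw, Real.mul_rpow (by positivity) hn,
      ← Real.rpow_mul hd0.le, ← Real.rpow_mul hd0.le]
    have : d ^ ((1 - a) * a) * d ^ (-a * (1 - a)) = 1 := by
      rw [← Real.rpow_add hd0]; ring_nf; exact Real.rpow_zero _
    calc _ = (d ^ ((1 - a) * a) * d ^ (-a * (1 - a))) * (w ^ a * n ^ (1 - a)) := by ring
      _ = _ := by rw [this, one_mul]
  rw [e] at key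
  have t1 : 0 ≤ d ^ (-a) * n := by positivity
  rw [hd1] at key
  nlinarith

lemma conv_core_real [Fintype X] [Fintype Y] {p : X → ℝ} {w : X → Y → ℝ}
    (hp : ∀ x, 0 ≤ p x) (hp1 : ∑ x, p x = 1) (hw : ∀ x y, 0 ≤ w x y)
    (hw1 : ∀ x, ∑ y, w x y = 1) {q : Y → ℝ} (hq : ∀ y, q y = ∑ x, p x * w x y) {I : ℝ}
    (hI : I = ∑ x, ∑ y, p x * w x y * Real.logb 2 (w x y / q y))
    {a : ℝ} (h0 : 0 < a) (h1 : a < 1) {δ : ℝ} (hδ : 0 < δ) :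
    ∃ C : ℝ, ∀ᶠ n : ℕ in atTop, ∀ (c : ℝ) (N : (Fin n → X) → (Fin n → Y) → ℝ)
      (R : (Fin n → Y) → ℝ), (∀ xs ys, 0 ≤ N xs ys) → (∀ xs, ∑ ys, N xs ys = 1) →
      (∀ ys, 0 ≤ R ys) → (∑ ys, R ys = 1) → (∀ xs ys, N xs ys ≤ 2 ^ c * R ys) →
      (∀ xs, 3 / 4 ≤ ∑ ys, (∏ i, w (xs i) (ys i)) ^ a * N xs ys ^ (1 - a)) →
      n * (I - δ) ≤ c + C := by
  obtain ⟨C1, hC1, ht1⟩ := tang h0 h1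
  obtain ⟨C2, hC2, ht2⟩ := tang (a := 1 - a) (by linarith) (by linarith)
  set z : X → Y → ℝ := fun x y => ((I - δ) - Real.logb 2 (w x y / q y)) * Real.log 2 with hz
  have hl2 : 0 < Real.log 2 := Real.log_pos (by norm_num)
  have hq0 : ∀ y, 0 ≤ q y := fun y => by
    rw [hq]; exact Finset.sum_nonneg fun x _ => mul_nonneg (hp x) (hw x y)
  have hpw1 : ∑ x, ∑ y, p x * w x y = 1 := by
    simp_rw [← Finset.mul_sum, hw1, mul_one, hp1]
  have hmean : ∑ i : X × Y, (p i.1 * w i.1 i.2) * z i.1 i.2 < 0 := by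
    rw [Fintype.sum_prod_type]
    have : ∑ x, ∑ y, (p x * w x y) * z x y
        = ((I - δ) * ∑ x, ∑ y, p x * w x y) * Real.log 2
          - (∑ x, ∑ y, p x * w x y * Real.logb 2 (w x y / q y)) * Real.log 2 := by
      simp only [Finset.mul_sum, Finset.sum_mul]
      rw [← Finset.sum_sub_distrib]
      refine Finset.sum_congr rfl fun x _ => ?_
      rw [← Finset.sum_sub_distrib]
      refine Finset.sum_congr rfl fun y _ => ?_
      rw [hz]; ring
    simp only
    rw [this, ← hI, hpw1]
    nlinarith
  obtain ⟨s, hs, hs0⟩ := ((mgf_lemma (fun i : X × Y => p i.1 * w i.1 i.2)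
    (fun i => z i.1 i.2) (by rw [Fintype.sum_prod_type]; exact hpw1) hmean).and
    self_mem_nhdsWithin).exists
  have hs0' : (0:ℝ) < s := hs0
  rw [Fintype.sum_prod_type] at hs
  simp only at hs
  set ρ := ∑ x, ∑ y, p x * w x y * Real.exp (s * z x y) with hρ
  have hρ0 : 0 ≤ ρ := Finset.sum_nonneg fun x _ => Finset.sum_nonneg fun y _ =>
    mul_nonneg (mul_nonneg (hp x) (hw x y)) (Real.exp_pos _).le
  have hlim : Tendsto (fun n : ℕ => C2 * ρ ^ n) atTop (nhds 0) := by
    simpa using (tendsto_pow_atTop_nhds_zero_of_lt_one hρ0 hs).const_mul C2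
  refine ⟨Real.logb 2 (8 * C1), ?_⟩
  filter_upwards [hlim.eventually (gt_mem_nhds (by norm_num : (0:ℝ) < 1 / 8))] with n hn
  intro c N R hN0 hN1 hR0 hR1 hNR hmain
  set γ : ℝ := 2 ^ (n * (I - δ)) with hγ
  have hγ0 : 0 < γ := by positivity
  set pn : (Fin n → X) → ℝ := fun xs => ∏ i, p (xs i) with hpn
  set wn : (Fin n → X) → (Fin n → Y) → ℝ := fun xs ys => ∏ i, w (xs i) (ys i) with hwn
  set qn : (Fin n → Y) → ℝ := fun ys => ∏ i, q (ys i) with hqn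
  have hpn0 : ∀ xs, 0 ≤ pn xs := fun xs => Finset.prod_nonneg fun i _ => hp _
  have hwn0 : ∀ xs ys, 0 ≤ wn xs ys := fun xs ys => Finset.prod_nonneg fun i _ => hw _ _
  have hqn0 : ∀ ys, 0 ≤ qn ys := fun ys => Finset.prod_nonneg fun i _ => hq0 _
  have hpn1 : ∑ xs, pn xs = 1 := by
    rw [hpn, ← Fintype.sum_pow, hp1, one_pow]
  have hpwn : ∑ xs, ∑ ys, pn xs * wn xs ys = 1 := by
    have := sum_sum_prod_words n fun x y => p x * w x y
    rw [hpw1, one_pow] at this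
    rw [← this]
    simp_rw [Finset.prod_mul_distrib, hpn, hwn]
  have hqe : ∀ ys, ∑ xs, pn xs * wn xs ys = qn ys := by
    intro ys
    rw [hqn]
    simp only [hq]
    rw [← sum_prod_words n fun i x => p x * w x (ys i)]
    simp_rw [Finset.prod_mul_distrib, hpn, hwn]
  set t : (Fin n → X) → (Fin n → Y) → ℝ := fun xs ys => ∑ i, z (xs i) (ys i) with htt
  have hche : ∑ xs, ∑ ys, pn xs * wn xs ys * Real.exp (s * t xs ys) = ρ ^ n := by
    rw [hρ, ← sum_sum_prod_words n fun x y => p x * w x y * Real.exp (s * z x y)]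
    simp_rw [Finset.prod_mul_distrib, hpn, hwn, htt, Finset.mul_sum, Real.exp_sum]
  have hpt : ∀ xs ys, pn xs * (wn xs ys ^ a * N xs ys ^ (1 - a)) ≤
      1 / 4 * (pn xs * wn xs ys) + 1 / 4 * (pn xs * N xs ys)
      + C2 * (pn xs * wn xs ys * Real.exp (s * t xs ys))
      + C1 * (2 ^ c * (R ys * (pn xs * wn xs ys * (γ * qn ys)⁻¹))) := by
    intro xs ys
    have A1 : 0 ≤ 1 / 4 * (pn xs * wn xs ys) :=
      mul_nonneg (by norm_num) (mul_nonneg (hpn0 _) (hwn0 _ _))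
    have A2 : 0 ≤ 1 / 4 * (pn xs * N xs ys) :=
      mul_nonneg (by norm_num) (mul_nonneg (hpn0 _) (hN0 _ _))
    have A3 : 0 ≤ C2 * (pn xs * wn xs ys * Real.exp (s * t xs ys)) :=
      mul_nonneg hC2.le (mul_nonneg (mul_nonneg (hpn0 _) (hwn0 _ _)) (Real.exp_pos _).le)
    have A4 : 0 ≤ C1 * (2 ^ c * (R ys * (pn xs * wn xs ys * (γ * qn ys)⁻¹))) :=
      mul_nonneg hC1.le (mul_nonneg (by positivity) (mul_nonneg (hR0 _)
        (mul_nonneg (mul_nonneg (hpn0 _) (hwn0 _ _))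
          (inv_nonneg.2 (mul_nonneg hγ0.le (hqn0 _))))))
    by_cases hpos : pn xs * wn xs ys = 0
    · have : pn xs * (wn xs ys ^ a * N xs ys ^ (1 - a)) = 0 := by
        rcases mul_eq_zero.1 hpos with h | h
        · rw [h, zero_mul]
        · rw [h, Real.zero_rpow h0.ne', zero_mul, mul_zero]
      rw [this]; linarith
    · have hpx := (mul_ne_zero_iff.1 hpos).1
      have hwx := (mul_ne_zero_iff.1 hpos).2
      have hpi : ∀ i, 0 < p (xs i) := fun i => lt_of_le_of_ne (hp _)
        (Ne.symm (Finset.prod_ne_zero_iff.1 hpx i (Finset.mem_univ i)))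
      have hwi : ∀ i, 0 < w (xs i) (ys i) := fun i => lt_of_le_of_ne (hw _ _)
        (Ne.symm (Finset.prod_ne_zero_iff.1 hwx i (Finset.mem_univ i)))
      have hqi : ∀ i, 0 < q (ys i) := fun i => by
        rw [hq]
        refine lt_of_lt_of_le (mul_pos (hpi i) (hwi i)) ?_
        exact Finset.single_le_sum (f := fun x => p x * w x (ys i))
          (fun x _ => mul_nonneg (hp x) (hw x _)) (Finset.mem_univ (xs i))
      have hqpos : 0 < qn ys := Finset.prod_pos fun i _ => hqi i
      have hwpos : 0 < wn xs ys := Finset.prod_pos fun i _ => hwi i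
      have hexp : Real.exp (t xs ys) * wn xs ys = γ * qn ys := by
        rw [htt, hwn, hqn, hγ]
        simp only
        rw [Real.exp_sum, ← Finset.prod_mul_distrib]
        have : ∀ i, Real.exp (z (xs i) (ys i)) * w (xs i) (ys i)
            = 2 ^ (I - δ) * q (ys i) := by
          intro i
          have e1 : z (xs i) (ys i) = Real.log 2 * (I - δ)
              - Real.log (w (xs i) (ys i) / q (ys i)) := by
            rw [hz]; simp only; rw [Real.logb]; field_simp
          rw [e1, Real.exp_sub, ← Real.rpow_def_of_pos (by norm_num),
            Real.exp_log (div_pos (hwi i) (hqi i))]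
          have := hwi i
          have := hqi i
          field_simp
        simp_rw [this]
        rw [Finset.prod_mul_distrib, Finset.prod_const, Finset.card_univ, Fintype.card_fin,
          ← Real.rpow_natCast, ← Real.rpow_mul (by norm_num), mul_comm (I - δ)]
      by_cases ht : t xs ys ≤ 0
      · have hle : γ * qn ys ≤ wn xs ys := by
          rw [← hexp]
          have : Real.exp (t xs ys) ≤ 1 := Real.exp_le_one_iff.2 ht
          nlinarith
        have hB : pn xs * N xs ys ≤ 2 ^ c * (R ys * (pn xs * wn xs ys * (γ * qn ys)⁻¹)) := by
          have h1 : 1 ≤ wn xs ys * (γ * qn ys)⁻¹ := by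
            rw [← div_eq_mul_inv, le_div_iff₀ (by positivity)]; linarith
          have h2 : 0 ≤ pn xs * (2 ^ c * R ys) :=
            mul_nonneg (hpn0 _) (mul_nonneg (by positivity) (hR0 _))
          calc pn xs * N xs ys ≤ pn xs * (2 ^ c * R ys) :=
                mul_le_mul_of_nonneg_left (hNR _ _) (hpn0 _)
            _ ≤ pn xs * (2 ^ c * R ys) * (wn xs ys * (γ * qn ys)⁻¹) :=
                le_mul_of_one_le_right h2 h1
            _ = _ := by ring
        have h3 := mul_le_mul_of_nonneg_left (ht1 _ _ (hwn0 xs ys) (hN0 xs ys)) (hpn0 xs)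
        have h4 := mul_le_mul_of_nonneg_left hB hC1.le
        have e3 : pn xs * (1 / 4 * wn xs ys + C1 * N xs ys)
          = 1 / 4 * (pn xs * wn xs ys) + C1 * (pn xs * N xs ys) := by ring
        linarith
      · have h3 := mul_le_mul_of_nonneg_left (ht2 _ _ (hN0 xs ys) (hwn0 xs ys)) (hpn0 xs)
        rw [sub_sub_cancel, mul_comm (N xs ys ^ (1 - a))] at h3
        have h5 : 1 ≤ Real.exp (s * t xs ys) := Real.one_le_exp (by
          push Not at ht; positivity)
        have h6 : pn xs * wn xs ys ≤ pn xs * wn xs ys * Real.exp (s * t xs ys) :=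
          le_mul_of_one_le_right (mul_nonneg (hpn0 _) (hwn0 _ _)) h5
        have h7 := mul_le_mul_of_nonneg_left h6 hC2.le
        have e3 : pn xs * (1 / 4 * N xs ys + C2 * wn xs ys)
          = 1 / 4 * (pn xs * N xs ys) + C2 * (pn xs * wn xs ys) := by ring
        linarith
  have hlow : 3 / 4 ≤ ∑ xs, ∑ ys, pn xs * (wn xs ys ^ a * N xs ys ^ (1 - a)) := by
    calc (3 / 4 : ℝ) = ∑ xs, pn xs * (3 / 4) := by rw [← Finset.sum_mul, hpn1, one_mul]
      _ ≤ _ := by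
        refine Finset.sum_le_sum fun xs _ => ?_
        rw [← Finset.mul_sum]
        exact mul_le_mul_of_nonneg_left (hmain xs) (hpn0 xs)
  have hup : ∑ xs, ∑ ys, pn xs * (wn xs ys ^ a * N xs ys ^ (1 - a)) ≤
      1 / 4 + 1 / 4 + C2 * ρ ^ n + C1 * (2 ^ c * γ⁻¹) := by
    calc _ ≤ ∑ xs, ∑ ys, (1 / 4 * (pn xs * wn xs ys) + 1 / 4 * (pn xs * N xs ys)
          + C2 * (pn xs * wn xs ys * Real.exp (s * t xs ys))
          + C1 * (2 ^ c * (R ys * (pn xs * wn xs ys * (γ * qn ys)⁻¹)))) :=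
          Finset.sum_le_sum fun xs _ => Finset.sum_le_sum fun ys _ => hpt xs ys
      _ = 1 / 4 * (∑ xs, ∑ ys, pn xs * wn xs ys) + 1 / 4 * (∑ xs, pn xs * ∑ ys, N xs ys)
          + C2 * (∑ xs, ∑ ys, pn xs * wn xs ys * Real.exp (s * t xs ys))
          + C1 * (2 ^ c * ∑ ys, R ys * ((∑ xs, pn xs * wn xs ys) * (γ * qn ys)⁻¹)) := by
          simp only [Finset.sum_add_distrib, Finset.mul_sum, Finset.sum_mul]
          congr 1
          exact Finset.sum_comm
      _ ≤ _ := by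
          rw [hpwn, hche]
          simp_rw [hN1, mul_one, hpn1, hqe]
          have : ∑ ys, R ys * (qn ys * (γ * qn ys)⁻¹) ≤ γ⁻¹ := by
            calc _ ≤ ∑ ys, R ys * γ⁻¹ := by
                  refine Finset.sum_le_sum fun ys _ => mul_le_mul_of_nonneg_left ?_ (hR0 ys)
                  by_cases h : qn ys = 0
                  · rw [h, zero_mul]; positivity
                  · rw [mul_inv, mul_comm γ⁻¹, ← mul_assoc, mul_inv_cancel₀ h, one_mul]
              _ = γ⁻¹ := by rw [← Finset.sum_mul, hR1, one_mul]
          gcongr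
          norm_num
  have hfin : γ ≤ 2 ^ c * (8 * C1) := by
    have : 1 / 8 ≤ C1 * (2 ^ c * γ⁻¹) := by linarith
    have h8 : γ * (1 / 8) ≤ γ * (C1 * (2 ^ c * γ⁻¹)) := mul_le_mul_of_nonneg_left this hγ0.le
    have h9 : γ * (C1 * (2 ^ c * γ⁻¹)) = C1 * 2 ^ c := by field_simp
    linarith
  have h10 := Real.logb_le_logb_of_le (by norm_num : (1:ℝ) < 2) hγ0 hfin
  rw [Real.logb_mul (by positivity) (by positivity), hγ,
    Real.logb_rpow (by norm_num) (by norm_num), Real.logb_rpow (by norm_num) (by norm_num)] at h10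
  exact h10


lemma conv_le [Fintype X] [Fintype Y] {W : X → Y → ℝ≥0∞} (hW : IsChannel W)
    {P : X → ℝ≥0∞} (hP : IsDist P) {α : ℝ≥0∞} (h0 : 0 < α) (h1 : α ≤ 1) :
    renyiMI 1 (joint P W) ≤ Rrst α W := by
  set q : Y → ℝ≥0∞ := fun y => ∑ x, P x * W x y with hq
  have hqd : IsDist q := by
    unfold IsDist
    rw [hq, Finset.sum_comm]
    simp_rw [← Finset.mul_sum, hW _, mul_one]
    exact hP
  set I : ℝ := ∑ x, ∑ y, (P x).toReal * (W x y).toReal *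
    Real.logb 2 ((W x y).toReal / (q y).toReal) with hI
  trans (I : EReal)
  · refine (renyiMI_le hW 1 P hqd).trans ?_
    rw [renyiD_one_eq]
    · rw [EReal.coe_le_coe_iff, hI, Fintype.sum_prod_type]
      apply le_of_eq
      refine Finset.sum_congr rfl fun x _ => Finset.sum_congr rfl fun y _ => ?_
      unfold joint
      simp only [ENNReal.toReal_mul]
      by_cases hx : (P x).toReal = 0
      · rw [hx]; simp
      · rw [mul_div_mul_left _ _ hx]
    · intro p; exact ENNReal.mul_ne_top (hP.ne_top _) (hW.ne_top _ _)
    · intro p; exact ENNReal.mul_ne_top (hP.ne_top _) (hqd.ne_top _)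
    · intro p hp
      unfold joint at hp
      refine mul_ne_zero (mul_ne_zero_iff.1 hp).1 ?_
      rw [hq]
      intro h
      exact hp ((Finset.sum_eq_zero_iff.1 h) p.1 (Finset.mem_univ _))
  · have hqr : ∀ y, (q y).toReal = ∑ x, (P x).toReal * (W x y).toReal := by
      intro y
      rw [hq]
      simp only
      rw [ENNReal.toReal_sum fun x _ => ENNReal.mul_ne_top (hP.ne_top _) (hW.ne_top _ _)]
      simp_rw [ENNReal.toReal_mul]
    obtain ⟨a, ha0, ha1, ε, hε, hac⟩ : ∃ a : ℝ, 0 < a ∧ a < 1 ∧ ∃ ε : ℝ, 0 < ε ∧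
        ∀ (n : ℕ) (A B : (Fin n → Y) → ℝ≥0∞), IsDist A → IsDist B →
        renyiD α A B ≤ (ε : EReal) → 3 / 4 ≤ ∑ x, (A x).toReal ^ a * (B x).toReal ^ (1 - a) := by
      rcases h1.eq_or_lt with rfl | h1
      · refine ⟨1 / 2, by norm_num, by norm_num, 1 / 2, by norm_num, fun n A B hA hB h => ?_⟩
        have := lt_of_one hA hB (a := 1 / 2) (by norm_num) (by norm_num) h
        have hl : Real.log 2 ≤ 1 := by linarith [Real.log_two_lt_d9]
        linarith
      · have ha1 := toReal_lt h1
        have ht : α ≠ ⊤ := (h1.trans ENNReal.one_lt_top).ne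
        have ha0 : 0 < α.toReal := ENNReal.toReal_pos h0.ne' ht
        refine ⟨α.toReal, ha0, ha1, 1 / 4, by norm_num, fun n A B hA hB h => ?_⟩
        rw [renyiD_lt_le_iff h0 h1, sum_rpow_eq hA.ne_top hB.ne_top ha0 (Or.inl ha1.le),
          ENNReal.ofReal_le_ofReal_iff (Finset.sum_nonneg fun x _ => by positivity)] at h
        refine le_trans ?_ h
        rw [Real.rpow_def_of_pos (by norm_num)]
        refine le_trans ?_ (Real.add_one_le_exp _)
        have hl : Real.log 2 ≤ 1 := by linarith [Real.log_two_lt_d9]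
        have hl0 : 0 ≤ Real.log 2 := Real.log_nonneg (by norm_num)
        nlinarith
    refine le_Rrst α fun δ hδ => ⟨ε, hε, ?_⟩
    obtain ⟨C, hC⟩ := conv_core_real (p := fun x => (P x).toReal)
      (w := fun x y => (W x y).toReal) (fun x => ENNReal.toReal_nonneg) hP.sum_toReal
      (fun x y => ENNReal.toReal_nonneg) (fun x => IsDist.sum_toReal (P := W x) (hW x))
      hqr hI ha0 ha1 hδ
    refine ⟨C, ?_⟩
    filter_upwards [hC] with n hn
    intro c N hN hD
    obtain ⟨R, hR, hNR⟩ := hN.bound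
    refine hn c (fun xs ys => (N xs ys).toReal) (fun ys => (R ys).toReal)
      (fun _ _ => ENNReal.toReal_nonneg)
      (fun xs => IsDist.sum_toReal (P := N xs) (hN.isChannel xs))
      (fun _ => ENNReal.toReal_nonneg) hR.sum_toReal ?_ ?_
    · intro xs ys
      have := ENNReal.toReal_mono (ENNReal.mul_ne_top ENNReal.ofReal_ne_top (hR.ne_top ys))
        (hNR xs ys)
      rwa [ENNReal.toReal_mul, ENNReal.toReal_ofReal (by positivity)] at this
    · intro xs
      have := hac n _ _ (prodCh_isChannel hW n xs) (hN.isChannel xs) (hD xs)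
      unfold prodCh at this
      simp_rw [ENNReal.toReal_prod] at this
      exact this


lemma isSimulation_of_real [Fintype X] [Fintype Y] {K : Type*} [Fintype K] {c : ℝ} {M : ℕ}
    (hM : 0 < M) (hc : Real.logb 2 M ≤ c) {PK : K → ℝ} {E : X → K → Fin M → ℝ}
    {D : Fin M → K → Y → ℝ} (hP0 : ∀ k, 0 ≤ PK k) (hE0 : ∀ x k j, 0 ≤ E x k j)
    (hD0 : ∀ j k y, 0 ≤ D j k y) (hP : ∑ k, PK k = 1) (hE : ∀ x k, ∑ j, E x k j = 1)
    (hD : ∀ j k, ∑ y, D j k y = 1) :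
    IsSimulation c fun x y => ENNReal.ofReal (∑ k, ∑ j, PK k * E x k j * D j k y) := by
  set e := (Fintype.equivFin K).symm
  refine ⟨Fintype.card K, M, fun k => ENNReal.ofReal (PK (e k)),
    fun x k j => ENNReal.ofReal (E x (e k) j), fun j k y => ENNReal.ofReal (D j (e k) y),
    hM, hc, ?_, ?_, ?_, ?_⟩
  · rw [← ENNReal.ofReal_sum_of_nonneg fun k _ => hP0 _, e.sum_comp, hP, ENNReal.ofReal_one]
  · intro x k
    rw [← ENNReal.ofReal_sum_of_nonneg fun j _ => hE0 _ _ _, hE, ENNReal.ofReal_one]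
  · intro j k
    rw [← ENNReal.ofReal_sum_of_nonneg fun y _ => hD0 _ _ _, hD, ENNReal.ofReal_one]
  · intro x y
    simp only
    rw [← e.sum_comp, ENNReal.ofReal_sum_of_nonneg fun k _ => Finset.sum_nonneg fun j _ =>
      mul_nonneg (mul_nonneg (hP0 _) (hE0 _ _ _)) (hD0 _ _ _)]
    refine Finset.sum_congr rfl fun k _ => ?_
    rw [ENNReal.ofReal_sum_of_nonneg fun j _ =>
      mul_nonneg (mul_nonneg (hP0 _) (hE0 _ _ _)) (hD0 _ _ _)]
    refine Finset.sum_congr rfl fun j _ => ?_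
    rw [ENNReal.ofReal_mul (mul_nonneg (hP0 _) (hE0 _ _ _)), ENNReal.ofReal_mul (hP0 _)]

lemma prod_split {M : ℕ} (j : Fin M) (f g h : Fin M → ℝ) :
    (∏ i, f i) * (g j * ∏ i with i < j, h i) =
      ∏ i, (f i * if i < j then h i else if i = j then g i else 1) := by
  rw [Finset.prod_mul_distrib]
  congr 1
  have : ∀ i, (if i < j then h i else if i = j then g i else 1)
      = (if i < j then h i else 1) * (if i = j then g i else 1) := by
    intro i
    by_cases h1 : i < j
    · rw [if_pos h1, if_pos h1, if_neg h1.ne, mul_one]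
    · rw [if_neg h1, if_neg h1, one_mul]
  simp_rw [this]
  rw [Finset.prod_mul_distrib, Finset.prod_ite_eq' Finset.univ j, if_pos (Finset.mem_univ j),
    Finset.prod_filter, mul_comm]

lemma rejection_real [Fintype X] [Fintype Y] {v : X → Y → ℝ} {q : Y → ℝ} {L : ℝ} (hL : 0 < L)
    {M : ℕ} (hM : 0 < M) {c : ℝ} (hc : Real.logb 2 M ≤ c) (hq0 : ∀ y, 0 ≤ q y)
    (hq1 : ∑ y, q y = 1) (hv0 : ∀ x y, 0 ≤ v x y) (hvL : ∀ x y, v x y ≤ L * q y)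
    (hv1 : ∀ x, ∑ y, v x y ≤ 1) (hv2 : ∀ x, 1 / 2 ≤ ∑ y, v x y) :
    ∃ N : X → Y → ℝ, IsSimulation c (fun x y => ENNReal.ofReal (N x y)) ∧
      ∀ x y, (1 - Real.exp (-(M / (2 * L)))) * v x y ≤ N x y := by
  set a : X → Y → ℝ := fun x y => v x y / (L * q y) with ha
  have haq : ∀ x y, q y * a x y = v x y / L := by
    intro x y
    rw [ha]
    simp only
    by_cases h : q y = 0
    · have := hvL x y
      rw [h, mul_zero] at this
      rw [h, zero_mul, le_antisymm this (hv0 x y), zero_div]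
    · field_simp
  have ha0 : ∀ x y, 0 ≤ a x y := fun x y => div_nonneg (hv0 _ _) (mul_nonneg hL.le (hq0 y))
  have ha1 : ∀ x y, 0 ≤ 1 - a x y := fun x y =>
    sub_nonneg.2 (div_le_one_of_le₀ (hvL x y) (mul_nonneg hL.le (hq0 y)))
  set A : X → ℝ := fun x => ∑ y, q y * a x y with hA
  have hAe : ∀ x, A x = (∑ y, v x y) / L := by
    intro x
    rw [hA]; simp only; simp_rw [haq]; rw [Finset.sum_div]
  have hA1 : ∀ x, ∑ y, q y * (1 - a x y) = 1 - A x := by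
    intro x
    simp_rw [mul_sub, mul_one]; rw [Finset.sum_sub_distrib, hq1]
  have hA1' : ∀ x, 0 ≤ 1 - A x := by
    intro x
    rw [← hA1]
    exact Finset.sum_nonneg fun y _ => mul_nonneg (hq0 y) (ha1 x y)
  set E : X → (Fin M → Y) → Fin M → ℝ := fun x k j =>
    a x (k j) * (∏ i with i < j, (1 - a x (k i))) +
      if j = ⟨0, hM⟩ then ∏ i, (1 - a x (k i)) else 0 with hE
  set PK : (Fin M → Y) → ℝ := fun k => ∏ i, q (k i) with hPK
  set D : Fin M → (Fin M → Y) → Y → ℝ := fun j k y => if y = k j then 1 else 0 with hD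
  have hPK0 : ∀ k, 0 ≤ PK k := fun k => Finset.prod_nonneg fun i _ => hq0 _
  have hD0 : ∀ j k y, 0 ≤ D j k y := fun j k y => by rw [hD]; simp only; split_ifs <;> norm_num
  have hpr : ∀ x (k : Fin M → Y), 0 ≤ ∏ i : Fin M, (1 - a x (k i)) :=
    fun x k => Finset.prod_nonneg fun i _ => ha1 _ _
  have hE0' : ∀ x (k : Fin M → Y) (j : Fin M), 0 ≤ a x (k j) * (∏ i with i < j, (1 - a x (k i))) := fun x k j =>
    mul_nonneg (ha0 _ _) (Finset.prod_nonneg fun i _ => ha1 _ _)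
  have hE0 : ∀ x k j, 0 ≤ E x k j := fun x k j => by
    refine add_nonneg (hE0' x k j) ?_
    split_ifs
    · exact hpr x k
    · exact le_rfl
  refine ⟨fun x y => ∑ k, ∑ j, PK k * E x k j * D j k y,
    isSimulation_of_real hM hc hPK0 hE0 hD0 ?_ ?_ ?_, ?_⟩
  · rw [hPK, ← Fintype.sum_pow, hq1, one_pow]
  · intro x k
    rw [hE]
    simp only
    rw [Finset.sum_add_distrib, Finset.sum_ite_eq' Finset.univ, if_pos (Finset.mem_univ _),
      Finset.prod_one_sub_ordered Finset.univ]
    ring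
  · intro j k
    rw [hD]; simp
  · intro x y
    have h1 : ∀ j : Fin M, ∑ k : Fin M → Y, PK k * (a x (k j) *
        ∏ i with i < j, (1 - a x (k i))) * D j k y = (1 - A x) ^ (j : ℕ) * (v x y / L) := by
      intro j
      calc _ = ∑ k : Fin M → Y, ∏ i, (q (k i) * if i < j then (1 - a x (k i)) else
              if i = j then (a x (k i) * if y = k i then 1 else 0) else 1) := by
            refine Finset.sum_congr rfl fun k _ => ?_
            rw [← prod_split j (fun i => q (k i)) (fun i => a x (k i) * if y = k i then 1 else 0)
              (fun i => 1 - a x (k i))]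
            rw [hPK, hD]; ring
        _ = ∏ i, ∑ u, (q u * if i < j then (1 - a x u) else
              if i = j then (a x u * if y = u then 1 else 0) else 1) :=
            sum_prod_words M fun i u => (q u * if i < j then (1 - a x u) else
              if i = j then (a x u * if y = u then 1 else 0) else 1)
        _ = ∏ i, (1 * if i < j then (1 - A x) else if i = j then v x y / L else 1) := by
            refine Finset.prod_congr rfl fun i _ => ?_
            by_cases hi : i < j
            · simp only [if_pos hi, one_mul, hA1]
            · by_cases hij : i = j
              · simp only [if_neg hi, if_pos hij, one_mul]
                simp [haq]
              · simp only [if_neg hi, if_neg hij, mul_one, hq1]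
        _ = _ := by
            have := prod_split j (fun _ => 1) (fun _ => v x y / L) (fun _ => 1 - A x)
            rw [← this, Finset.prod_const_one, one_mul, Finset.prod_const, mul_comm]
            congr 2
            rw [← Fin.card_Iio j]
            congr 1
            ext i
            rw [Finset.mem_filter, Finset.mem_Iio]
            simp
    have h2 : ∑ j : Fin M, (1 - A x) ^ (j : ℕ) * (v x y / L) ≤
        ∑ k, ∑ j, PK k * E x k j * D j k y := by
      rw [Finset.sum_comm]
      refine Finset.sum_le_sum fun j _ => ?_
      rw [← h1 j]
      refine Finset.sum_le_sum fun k _ => ?_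
      refine mul_le_mul_of_nonneg_right (mul_le_mul_of_nonneg_left ?_ (hPK0 k)) (hD0 _ _ _)
      rw [hE]
      simp only
      have : 0 ≤ if j = ⟨0, hM⟩ then ∏ i, (1 - a x (k i)) else 0 := by
        split_ifs
        · exact hpr x k
        · exact le_rfl
      linarith
    refine le_trans ?_ h2
    rw [← Finset.sum_mul, Fin.sum_univ_eq_sum_range (fun j => (1 - A x) ^ j) M]
    set G := ∑ j ∈ Finset.range M, (1 - A x) ^ j with hG
    have hG0 : 0 ≤ G := Finset.sum_nonneg fun j _ => pow_nonneg (hA1' x) j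
    have h3 : A x * G = 1 - (1 - A x) ^ M := by
      have := mul_neg_geom_sum (1 - A x) M
      rw [sub_sub_cancel] at this
      exact this
    have h4 : (1 - A x) ^ M ≤ Real.exp (-(M / (2 * L))) := by
      calc (1 - A x) ^ M ≤ (Real.exp (-A x)) ^ M := by
            gcongr
            · exact hA1' x
            · linarith [Real.add_one_le_exp (-A x)]
        _ = Real.exp (-(A x * M)) := by rw [← Real.exp_nat_mul]; ring_nf
        _ ≤ _ := by
            rw [Real.exp_le_exp, neg_le_neg_iff, hAe]
            have : (M:ℝ) / (2 * L) = (1 / 2) / L * M := by field_simp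
            rw [this]
            gcongr
            exact hv2 x
    have h5 : 1 - Real.exp (-(M / (2 * L))) ≤ G / L := by
      have h6 : A x * G ≤ G / L := by
        rw [hAe, div_mul_eq_mul_div]
        gcongr
        nlinarith [hv1 x]
      linarith
    calc _ ≤ G / L * v x y := mul_le_mul_of_nonneg_right h5 (hv0 x y)
      _ = _ := by ring

lemma rejection [Fintype X] [Fintype Y] {V : X → Y → ℝ≥0∞} {Q : Y → ℝ≥0∞} {L : ℝ} (hL : 0 < L)
    {M : ℕ} (hM : 0 < M) {c : ℝ} (hc : Real.logb 2 M ≤ c) (hQ : IsDist Q)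
    (hvL : ∀ x y, V x y ≤ ENNReal.ofReal L * Q y)
    (hv1 : ∀ x, ∑ y, V x y ≤ 1) (hv2 : ∀ x, 1 / 2 ≤ ∑ y, V x y) :
    ∃ N : X → Y → ℝ≥0∞, IsSimulation c N ∧
      ∀ x y, ENNReal.ofReal (1 - Real.exp (-(M / (2 * L)))) * V x y ≤ N x y := by
  have hVt : ∀ x y, V x y ≠ ⊤ := fun x y => ne_top_of_le_ne_top
    (ENNReal.mul_ne_top ENNReal.ofReal_ne_top (hQ.ne_top y)) (hvL x y)
  have hsum : ∀ x, (∑ y, V x y).toReal = ∑ y, (V x y).toReal := fun x =>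
    ENNReal.toReal_sum fun y _ => hVt x y
  obtain ⟨N, hN, hNV⟩ := rejection_real (v := fun x y => (V x y).toReal)
    (q := fun y => (Q y).toReal) hL hM hc (fun _ => ENNReal.toReal_nonneg) hQ.sum_toReal
    (fun _ _ => ENNReal.toReal_nonneg)
    (fun x y => by
      have := ENNReal.toReal_mono (ENNReal.mul_ne_top ENNReal.ofReal_ne_top (hQ.ne_top y))
        (hvL x y)
      rwa [ENNReal.toReal_mul, ENNReal.toReal_ofReal hL.le] at this)
    (fun x => by
      have := ENNReal.toReal_mono ENNReal.one_ne_top (hv1 x)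
      rwa [hsum, ENNReal.toReal_one] at this)
    (fun x => by
      have := ENNReal.toReal_mono (ENNReal.sum_ne_top.2 fun y _ => hVt x y) (hv2 x)
      rw [hsum] at this
      simpa using this)
  refine ⟨_, hN, fun x y => ?_⟩
  have h1 : 0 ≤ 1 - Real.exp (-(M / (2 * L))) := by
    rw [sub_nonneg, Real.exp_le_one_iff, neg_nonpos]; positivity
  calc _ = ENNReal.ofReal ((1 - Real.exp (-(M / (2 * L)))) * (V x y).toReal) := by
        rw [ENNReal.ofReal_mul h1, ENNReal.ofReal_toReal (hVt x y)]
    _ ≤ _ := ENNReal.ofReal_le_ofReal (hNV x y)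


lemma tendsto_two_rpow {t : ℝ} (ht : 0 < t) :
    Tendsto (fun n : ℕ => (2:ℝ) ^ ((n:ℝ) * t)) atTop atTop := by
  have h : (fun n : ℕ => (2:ℝ) ^ ((n:ℝ) * t)) = fun n : ℕ => ((2:ℝ) ^ t) ^ n := by
    funext n
    rw [mul_comm, Real.rpow_mul (by norm_num), Real.rpow_natCast]
  rw [h]
  exact tendsto_pow_atTop_atTop_of_one_lt (Real.one_lt_rpow (by norm_num) ht)

lemma msg {r r1 : ℝ} (hr : 0 ≤ r) (h : r1 < r) {η : ℝ} (hη : 0 < η) :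
    ∀ᶠ n : ℕ in atTop, ∃ M : ℕ, 0 < M ∧ Real.logb 2 M ≤ n * r ∧
      Real.exp (-(M / (2 * (2:ℝ) ^ (n * r1)))) ≤ η := by
  have h1 := (tendsto_two_rpow (sub_pos.2 h)).eventually_ge_atTop (4 * (-Real.log η))
  filter_upwards [h1] with n hn
  have hge : (1:ℝ) ≤ (2:ℝ) ^ (n * r) := Real.one_le_rpow (by norm_num) (by positivity)
  have hM : 0 < ⌊(2:ℝ) ^ (n * r)⌋₊ := Nat.floor_pos.2 hge
  refine ⟨⌊(2:ℝ) ^ (n * r)⌋₊, hM, ?_, ?_⟩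
  · have h2 := Nat.floor_le (by positivity : 0 ≤ (2:ℝ) ^ (n * r))
    have h3 := Real.logb_le_logb_of_le (by norm_num : (1:ℝ) < 2) (by exact_mod_cast hM) h2
    rwa [Real.logb_rpow (by norm_num) (by norm_num)] at h3
  · rw [← Real.le_log_iff_exp_le hη]
    have h4 : (2:ℝ) ^ (n * r) / 2 ≤ (⌊(2:ℝ) ^ (n * r)⌋₊ : ℝ) := by
      have h5 := Nat.lt_floor_add_one ((2:ℝ) ^ (n * r))
      have h6 : (1:ℝ) ≤ (⌊(2:ℝ) ^ (n * r)⌋₊ : ℝ) := by exact_mod_cast hM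
      linarith
    have h7 : (2:ℝ) ^ (n * (r - r1)) / 4 ≤ (⌊(2:ℝ) ^ (n * r)⌋₊ : ℝ) / (2 * (2:ℝ) ^ (n * r1)) := by
      rw [le_div_iff₀ (by positivity)]
      have : (2:ℝ) ^ (n * (r - r1)) * (2:ℝ) ^ (n * r1) = (2:ℝ) ^ (n * r) := by
        rw [← Real.rpow_add (by norm_num)]; congr 1; ring
      linarith
    linarith

lemma prod_p2_mul [Fintype Y] (n : ℕ) (r1 : ℝ) (Q : Y → ℝ≥0∞) (ys : Fin n → Y) :
    ∏ i, (p2 r1 * Q (ys i)) = p2 (n * r1) * prodDist n Q ys := by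
  rw [Finset.prod_mul_distrib, Finset.prod_const, Finset.card_univ, Fintype.card_fin, p2_pow]
  rfl

lemma ach_top [Fintype X] [Fintype Y] {W : X → Y → ℝ≥0∞} (hW : IsChannel W) {Q : Y → ℝ≥0∞}
    (hQ : IsDist Q) {r r1 : ℝ} (hWQ : ∀ x y, W x y ≤ p2 r1 * Q y) (hr : 0 ≤ r) (h : r1 < r)
    {η : ℝ} (hη : 0 < η) : ∀ᶠ n : ℕ in atTop, ∃ N, IsSimulation (n * r) N ∧
      ∀ xs ys, ENNReal.ofReal (1 - η) * prodCh n W xs ys ≤ N xs ys := by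
  filter_upwards [msg hr h hη] with n ⟨M, hM, hc, hexp⟩
  have hWn := prodCh_isChannel hW n
  obtain ⟨N, hN, hNV⟩ := rejection (V := prodCh n W) (Q := prodDist n Q)
    (L := (2:ℝ) ^ (n * r1)) (by positivity) hM hc (prodDist_isDist hQ n)
    (fun xs ys => by
      change _ ≤ p2 (n * r1) * _
      rw [← prod_p2_mul]
      exact Finset.prod_le_prod' fun i _ => hWQ _ _)
    (fun xs => (hWn xs).le) (fun xs => by
      rw [hWn xs]
      simp)
  refine ⟨N, hN, fun xs ys => le_trans ?_ (hNV xs ys)⟩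
  gcongr

lemma ach_gt [Fintype X] [Fintype Y] {W : X → Y → ℝ≥0∞} (hW : IsChannel W) {Q : Y → ℝ≥0∞}
    (hQ : IsDist Q) (hQ0 : ∀ y, Q y ≠ 0) {r r1 b : ℝ} (hb : 1 < b)
    (hWQ : ∀ x, ∑ y, W x y ^ b * Q y ^ (1 - b) ≤ p2 ((b - 1) * r1)) (hr : 0 ≤ r) (h : r1 < r)
    {κ : ℝ} (hκ : 0 < κ) : ∀ᶠ n : ℕ in atTop, ∃ N, IsSimulation (n * r) N ∧
      ∀ xs, ∑ ys, prodCh n W xs ys ^ b * N xs ys ^ (1 - b) ≤ ENNReal.ofReal (1 + κ) := by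
  obtain ⟨r2, hr12, hr2⟩ := exists_between h
  obtain ⟨u, hu0, hu⟩ : ∃ u : ℝ, 0 < u ∧ (1 + u) * (1 + u) ≤ 1 + κ := by
    refine ⟨min 1 (κ / 3), by positivity, ?_⟩
    have h1 := min_le_left 1 (κ / 3)
    have h2 := min_le_right 1 (κ / 3)
    have h3 : 0 < min 1 (κ / 3) := by positivity
    nlinarith
  have hb1 : b - 1 ≠ 0 := by linarith
  set θ : ℝ := (1 + u) ^ (-(1 / (b - 1))) with hθ
  have hθ0 : 0 < θ := by positivity
  have hθ1 : θ < 1 := by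
    apply Real.rpow_lt_one_of_one_lt_of_neg (by linarith)
    rw [neg_lt_zero]; apply div_pos one_pos; linarith
  have hθb : θ ^ (1 - b) = 1 + u := by
    rw [hθ, ← Real.rpow_mul (by positivity)]
    have : -(1 / (b - 1)) * (1 - b) = 1 := by field_simp; ring
    rw [this, Real.rpow_one]
  have ht : 0 < (b - 1) * (r2 - r1) := mul_pos (by linarith) (by linarith)
  have hmin : 0 < min u (1 / 2) := by positivity
  filter_upwards [msg hr hr2 (sub_pos.2 hθ1),
    (tendsto_two_rpow ht).eventually_ge_atTop (min u (1 / 2))⁻¹] with n ⟨M, hM, hc, hexp⟩ hτ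
  have hWn := prodCh_isChannel hW n
  set Wn := prodCh n W with hWnd
  set T : (Fin n → Y) → ℝ≥0∞ := fun ys => p2 (n * r2) * prodDist n Q ys with hT
  have hT0 : ∀ ys, T ys ≠ 0 := fun ys => mul_ne_zero (p2_ne_zero _)
    (Finset.prod_ne_zero_iff.2 fun i _ => hQ0 _)
  set τ : ℝ≥0∞ := p2 (-(n * ((b - 1) * (r2 - r1)))) with hτd
  have hτu : τ ≤ ENNReal.ofReal (min u (1 / 2)) := by
    rw [hτd]
    unfold p2
    apply ENNReal.ofReal_le_ofReal
    rw [Real.rpow_neg (by norm_num)]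
    exact inv_le_of_inv_le₀ hmin hτ
  have hsumT : ∀ xs, ∑ ys, Wn xs ys ^ b * T ys ^ (1 - b) ≤ τ := by
    intro xs
    calc ∑ ys, Wn xs ys ^ b * T ys ^ (1 - b)
        = p2 (n * r2 * (1 - b)) * ∑ ys : Fin n → Y,
            ∏ i, (W (xs i) (ys i) ^ b * Q (ys i) ^ (1 - b)) := by
          rw [Finset.mul_sum]
          refine Finset.sum_congr rfl fun ys _ => ?_
          rw [hT]
          simp only
          rw [ENNReal.mul_rpow_of_ne_top (p2_ne_top _) ((prodDist_isDist hQ n).ne_top ys),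
            p2_rpow, Finset.prod_mul_distrib, hWnd]
          unfold prodCh prodDist
          rw [ENNReal.prod_rpow_of_nonneg (by linarith),
            ENNReal.prod_rpow_of_ne_top fun i _ => hQ.ne_top _]
          ring
      _ = p2 (n * r2 * (1 - b)) * ∏ i, ∑ y, (W (xs i) y ^ b * Q y ^ (1 - b)) := by
          rw [sum_prod_words n fun i y => W (xs i) y ^ b * Q y ^ (1 - b)]
      _ ≤ p2 (n * r2 * (1 - b)) * ∏ i : Fin n, p2 ((b - 1) * r1) := by
          gcongr
          exact hWQ _
      _ = τ := by
          rw [Finset.prod_const, Finset.card_univ, Fintype.card_fin, p2_pow, ← p2_add, hτd]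
          congr 1
          ring
  have hself : ∀ xs ys, Wn xs ys ≠ 0 → Wn xs ys ^ b * Wn xs ys ^ (1 - b) = Wn xs ys := by
    intro xs ys h0
    rw [← ENNReal.rpow_add _ _ h0 (IsDist.ne_top (P := Wn xs) (hWn xs) ys), add_sub_cancel,
      ENNReal.rpow_one]
  have hanti : ∀ {x y : ℝ≥0∞}, x ≤ y → y ^ (1 - b) ≤ x ^ (1 - b) := by
    intro x y hxy
    have := rpow_anti hxy (z := b - 1) (by linarith)
    rwa [neg_sub] at this
  have hWV : ∀ xs ys, Wn xs ys ≤ min (Wn xs ys) (T ys) + Wn xs ys ^ b * T ys ^ (1 - b) := by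
    intro xs ys
    rcases le_total (Wn xs ys) (T ys) with h1 | h1
    · rw [min_eq_left h1]; exact le_self_add
    · have h0 : Wn xs ys ≠ 0 := fun h0 => hT0 ys (le_antisymm (h0 ▸ h1) zero_le)
      refine le_trans ?_ le_add_self
      conv_lhs => rw [← hself xs ys h0]
      exact mul_le_mul_right (hanti h1) _
  obtain ⟨N, hN, hNV⟩ := rejection (V := fun xs ys => min (Wn xs ys) (T ys))
    (Q := prodDist n Q)
    (L := (2:ℝ) ^ (n * r2)) (by positivity) hM hc (prodDist_isDist hQ n)
    (fun xs ys => min_le_right _ _)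
    (fun xs => (Finset.sum_le_sum fun ys _ => min_le_left _ _).trans (hWn xs).le) (fun xs => by
      have h1 : 1 ≤ ∑ ys, min (Wn xs ys) (T ys) + 1 / 2 := by
        calc 1 = ∑ ys, Wn xs ys := (hWn xs).symm
          _ ≤ ∑ ys, (min (Wn xs ys) (T ys) + Wn xs ys ^ b * T ys ^ (1 - b)) :=
            Finset.sum_le_sum fun ys _ => hWV xs ys
          _ ≤ _ := by
            rw [Finset.sum_add_distrib]
            gcongr
            refine (hsumT xs).trans (hτu.trans ?_)
            refine (ENNReal.ofReal_le_ofReal (min_le_right _ _)).trans ?_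
            rw [ENNReal.ofReal_div_of_pos (by norm_num)]
            simp
      have h2 := (ENNReal.add_halves 1).le.trans h1
      exact (ENNReal.add_le_add_iff_right (by simp)).1 h2)
  refine ⟨N, hN, fun xs => ?_⟩
  have hθN : ∀ ys, ENNReal.ofReal θ * min (Wn xs ys) (T ys) ≤ N xs ys := by
    intro ys
    refine le_trans ?_ (hNV xs ys)
    gcongr
    linarith
  have hterm : ∀ ys, Wn xs ys ^ b * N xs ys ^ (1 - b) ≤
      ENNReal.ofReal (1 + u) * (Wn xs ys + Wn xs ys ^ b * T ys ^ (1 - b)) := by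
    intro ys
    by_cases h0 : Wn xs ys = 0
    · rw [h0, ENNReal.zero_rpow_of_pos (by linarith), zero_mul]; exact zero_le
    calc Wn xs ys ^ b * N xs ys ^ (1 - b)
        ≤ Wn xs ys ^ b * (ENNReal.ofReal θ * min (Wn xs ys) (T ys)) ^ (1 - b) :=
          mul_le_mul_right (hanti (hθN ys)) _
      _ = ENNReal.ofReal (1 + u) * (Wn xs ys ^ b * (min (Wn xs ys) (T ys)) ^ (1 - b)) := by
          rw [ENNReal.mul_rpow_of_ne_top ENNReal.ofReal_ne_top
            (ne_top_of_le_ne_top (IsDist.ne_top (P := Wn xs) (hWn xs) ys) (min_le_left _ _)),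
            ENNReal.ofReal_rpow_of_pos hθ0, hθb]
          ring
      _ ≤ _ := by
          refine mul_le_mul_right ?_ _
          rcases le_total (Wn xs ys) (T ys) with h1 | h1
          · rw [min_eq_left h1, hself xs ys h0]; exact le_self_add
          · rw [min_eq_right h1]; exact le_add_self
  calc _ ≤ ∑ ys, ENNReal.ofReal (1 + u) * (Wn xs ys + Wn xs ys ^ b * T ys ^ (1 - b)) :=
        Finset.sum_le_sum fun ys _ => hterm ys
    _ ≤ ENNReal.ofReal (1 + u) * ENNReal.ofReal (1 + u) := by
        rw [← Finset.mul_sum, Finset.sum_add_distrib, hWn xs]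
        refine mul_le_mul_right ?_ _
        rw [ENNReal.ofReal_add zero_le_one hu0.le, ENNReal.ofReal_one]
        gcongr
        exact (hsumT xs).trans (hτu.trans (ENNReal.ofReal_le_ofReal (min_le_left _ _)))
    _ ≤ _ := by
        rw [← ENNReal.ofReal_mul (by positivity)]
        exact ENNReal.ofReal_le_ofReal hu


lemma minimax {ι E : Type*} [Fintype ι] [AddCommGroup E] [Module ℝ E] {K : Set E}
    (hK : K.Nonempty) {f : ι → E → ℝ} (hf : ∀ i, ConvexOn ℝ K (f i)) {t : ℝ}
    (h : ∀ q ∈ K, ∃ i, t ≤ f i q) :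
    ∃ p : ι → ℝ, (∀ i, 0 ≤ p i) ∧ ∑ i, p i = 1 ∧ ∀ q ∈ K, t ≤ ∑ i, p i * f i q := by
  set A : Set (ι → ℝ) := {v | ∃ q ∈ K, ∀ i, f i q < v i} with hA
  have hAo : IsOpen A := by
    have : A = ⋃ q ∈ K, Set.pi Set.univ fun i => Set.Ioi (f i q) := by
      ext v; simp [hA]
    rw [this]
    exact isOpen_biUnion fun q _ => isOpen_set_pi Set.finite_univ fun i _ => isOpen_Ioi
  have hAc : Convex ℝ A := by
    rintro v ⟨q, hq, hv⟩ w ⟨s, hs, hw⟩ a b ha hb hab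
    obtain ⟨i0, _⟩ := h q hq
    refine ⟨a • q + b • s, (hf i0).1 hq hs ha hb hab, fun i => ?_⟩
    refine ((hf i).2 hq hs ha hb hab).trans_lt ?_
    simp only [smul_eq_mul, Pi.add_apply, Pi.smul_apply]
    rcases ha.eq_or_lt with h0 | h0
    · have : b = 1 := by linarith
      rw [← h0, this]; simpa using hw i
    · have h1 := mul_lt_mul_of_pos_left (hv i) h0
      have h2 := mul_le_mul_of_nonneg_left (hw i).le hb
      linarith
  have hx : (fun _ : ι => t) ∉ A := by
    rintro ⟨q, hq, hv⟩
    obtain ⟨i, hi⟩ := h q hq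
    exact absurd (hv i) (not_lt.2 hi)
  obtain ⟨g, hg⟩ := geometric_hahn_banach_open_point hAc hAo hx
  set c : ι → ℝ := fun i => - g (Pi.single i 1) with hc
  have hge : ∀ v : ι → ℝ, g v = - ∑ i, c i * v i := by
    intro v
    have h1 : v = ∑ i, v i • (Pi.single i (1:ℝ) : ι → ℝ) := by
      funext j
      simp [Finset.sum_apply, Pi.single_apply]
    conv_lhs => rw [h1]
    rw [map_sum, ← Finset.sum_neg_distrib]
    refine Finset.sum_congr rfl fun i _ => ?_
    rw [map_smul, hc, smul_eq_mul]; ring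
  have hg' : ∀ v ∈ A, (∑ i, c i) * t < ∑ i, c i * v i := by
    intro v hv
    have h1 := hg v hv
    rw [hge, hge, neg_lt_neg_iff, ← Finset.sum_mul] at h1
    exact h1
  obtain ⟨q0, hq0⟩ := hK
  have hc0 : ∀ i, 0 ≤ c i := by
    intro i
    by_contra hneg
    push Not at hneg
    set v0 : ι → ℝ := fun j => f j q0 + 1 with hv0
    set B := ∑ j, c j * v0 j - (∑ j, c j) * t with hB
    have hB0 : 0 < B := by
      have := hg' v0 ⟨q0, hq0, fun j => by rw [hv0]; linarith⟩
      linarith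
    set s := B / (-c i) with hs
    have hs0 : 0 < s := div_pos hB0 (by linarith)
    have h1 := hg' (fun j => v0 j + if j = i then s else 0) ⟨q0, hq0, fun j => by
      have : 0 ≤ if j = i then s else 0 := by split_ifs <;> linarith
      simp only [hv0]; linarith⟩
    have h2 : ∑ j, c j * (v0 j + if j = i then s else 0) = ∑ j, c j * v0 j + c i * s := by
      simp [mul_add, Finset.sum_add_distrib]
    rw [h2] at h1
    have h3 : c i * s = -B := by
      have hci : c i ≠ 0 := hneg.ne
      rw [hs, div_neg, mul_neg, mul_div_cancel₀ B hci]
    rw [h3] at h1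
    linarith
  have hcs : 0 < ∑ i, c i := by
    refine lt_of_le_of_ne (Finset.sum_nonneg fun i _ => hc0 i) fun h0 => ?_
    have h1 := (Finset.sum_eq_zero_iff_of_nonneg fun i _ => hc0 i).1 h0.symm
    have h2 := hg' (fun j => f j q0 + 1) ⟨q0, hq0, fun j => by linarith⟩
    rw [← h0, zero_mul, Finset.sum_eq_zero fun i hi => by rw [h1 i hi, zero_mul]] at h2
    exact lt_irrefl _ h2
  refine ⟨fun i => c i / ∑ j, c j, fun i => div_nonneg (hc0 i) hcs.le, ?_, fun q hq => ?_⟩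
  · rw [← Finset.sum_div, div_self hcs.ne']
  · refine le_of_forall_pos_le_add fun ε hε => ?_
    have h1 := hg' (fun j => f j q + ε) ⟨q, hq, fun j => by linarith⟩
    simp_rw [mul_add] at h1
    rw [Finset.sum_add_distrib, ← Finset.sum_mul] at h1
    have h2 : ∑ i, c i / (∑ j, c j) * f i q = (∑ i, c i * f i q) / ∑ j, c j := by
      rw [Finset.sum_div]
      exact Finset.sum_congr rfl fun i _ => by ring
    rw [h2, ← sub_le_iff_le_add, le_div_iff₀ hcs]
    linarith

/-- strictly positive probability vectors -/
def posSimplex (Y : Type*) [Fintype Y] : Set (Y → ℝ) := {q | (∀ y, 0 < q y) ∧ ∑ y, q y = 1}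

lemma posSimplex_convex [Fintype Y] : Convex ℝ (posSimplex Y) := by
  rintro v ⟨hv, hv1⟩ w ⟨hw, hw1⟩ a b ha hb hab
  refine ⟨fun y => ?_, ?_⟩
  · simp only [smul_eq_mul, Pi.add_apply, Pi.smul_apply]
    rcases ha.eq_or_lt with h0 | h0
    · have : b = 1 := by linarith
      rw [← h0, this]; simpa using hw y
    · have h1 := mul_pos h0 (hv y)
      have h2 := mul_nonneg hb (hw y).le
      linarith
  · simp only [smul_eq_mul, Pi.add_apply, Pi.smul_apply]
    rw [Finset.sum_add_distrib, ← Finset.mul_sum, ← Finset.mul_sum, hv1, hw1]; linarith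

lemma mix [Fintype Y] [Nonempty Y] {Q : Y → ℝ≥0∞} (hQ : IsDist Q) {d : ℝ} (hd : 0 < d) :
    ∃ q ∈ posSimplex Y, ∀ y, p2 (-d) * Q y ≤ ENNReal.ofReal (q y) := by
  set θ : ℝ := 2 ^ (-d) with hθ
  have h0 : 0 < θ := by positivity
  have h1 : θ < 1 := Real.rpow_lt_one_of_one_lt_of_neg (by norm_num) (by linarith)
  have hcard : (0:ℝ) < Fintype.card Y := by exact_mod_cast Fintype.card_pos
  have hsm : 0 < (1 - θ) / Fintype.card Y := div_pos (by linarith) hcard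
  refine ⟨fun y => θ * (Q y).toReal + (1 - θ) / Fintype.card Y, ⟨fun y => ?_, ?_⟩, fun y => ?_⟩
  · have : 0 ≤ θ * (Q y).toReal := by positivity
    linarith
  · rw [Finset.sum_add_distrib, ← Finset.mul_sum, hQ.sum_toReal, Finset.sum_const,
      Finset.card_univ, nsmul_eq_mul]
    field_simp
    ring
  · have : p2 (-d) * Q y = ENNReal.ofReal (θ * (Q y).toReal) := by
      rw [ENNReal.ofReal_mul h0.le, ENNReal.ofReal_toReal (hQ.ne_top y)]; rfl
    rw [this]
    apply ENNReal.ofReal_le_ofReal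
    linarith

lemma isDist_ofReal {Z : Type*} [Fintype Z] {q : Z → ℝ} (h0 : ∀ y, 0 ≤ q y)
    (h1 : ∑ y, q y = 1) : IsDist fun y => ENNReal.ofReal (q y) := by
  unfold IsDist
  rw [← ENNReal.ofReal_sum_of_nonneg fun y _ => h0 y, h1, ENNReal.ofReal_one]

lemma rpow_convex {s a b x y : ℝ} (hs : s ≤ 0) (ha : 0 ≤ a) (hb : 0 ≤ b) (hab : a + b = 1)
    (hx : 0 < x) (hy : 0 < y) : (a * x + b * y) ^ s ≤ a * x ^ s + b * y ^ s := by
  have hlog := strictConcaveOn_log_Ioi.concaveOn.2 (Set.mem_Ioi.2 hx) (Set.mem_Ioi.2 hy) ha hb hab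
  have hexp := convexOn_exp.2 (Set.mem_univ (s * Real.log x)) (Set.mem_univ (s * Real.log y))
    ha hb hab
  simp only [smul_eq_mul] at hlog hexp
  have hpos : 0 < a * x + b * y := by
    rcases ha.eq_or_lt with h0 | h0
    · have : b = 1 := by linarith
      rw [← h0, this]; simpa using hy
    · have h1 := mul_pos h0 hx
      have h2 := mul_nonneg hb hy.le
      linarith
  rw [Real.rpow_def_of_pos hpos, Real.rpow_def_of_pos hx, Real.rpow_def_of_pos hy,
    mul_comm (Real.log x), mul_comm (Real.log y)]
  refine le_trans (Real.exp_le_exp.2 ?_) hexp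
  nlinarith

lemma exists_Q_gt [Fintype X] [Fintype Y] [Nonempty Y] {W : X → Y → ℝ≥0∞} (hW : IsChannel W)
    {α : ℝ≥0∞} (h1 : 1 < α) (ht : α ≠ ⊤) {r1 : ℝ} (hr : renyiCap α W < (r1 : EReal)) :
    ∃ Q : Y → ℝ≥0∞, IsDist Q ∧ (∀ y, Q y ≠ 0) ∧
      ∀ x, ∑ y, W x y ^ α.toReal * Q y ^ (1 - α.toReal) ≤ p2 ((α.toReal - 1) * r1) := by
  have ha := toReal_gt h1 ht
  set a := α.toReal with haa
  have conv : ∀ q ∈ posSimplex Y, ∀ x, ∑ y, W x y ^ a * ENNReal.ofReal (q y) ^ (1 - a)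
      = ENNReal.ofReal (∑ y, (W x y).toReal ^ a * q y ^ (1 - a)) := by
    intro q hq x
    rw [sum_rpow_eq (P := W x) (hW.ne_top x) (fun y => ENNReal.ofReal_ne_top) (by linarith)
      (Or.inr fun y _ => by simpa using hq.1 y)]
    simp_rw [fun y => ENNReal.toReal_ofReal (hq.1 y).le]
  by_contra hcon
  push Not at hcon
  have hex : ∀ q ∈ posSimplex Y, ∃ x, (2:ℝ) ^ ((a - 1) * r1) ≤
      ∑ y, (W x y).toReal ^ a * q y ^ (1 - a) := by
    intro q hq
    obtain ⟨x, hx⟩ := hcon _ (isDist_ofReal (fun y => (hq.1 y).le) hq.2)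
      (fun y => by simpa using hq.1 y)
    refine ⟨x, ?_⟩
    rw [conv q hq] at hx
    exact (ENNReal.lt_ofReal_iff_toReal_lt (p2_ne_top _)).1 hx |>.le |>.trans'
      (by unfold p2; rw [ENNReal.toReal_ofReal (by positivity)])
  have hne : (posSimplex Y).Nonempty := by
    obtain ⟨y⟩ := ‹Nonempty Y›
    obtain ⟨q, hq, _⟩ := mix (Q := fun y' => if y' = y then 1 else 0) (by simp [IsDist])
      one_pos
    exact ⟨q, hq⟩
  obtain ⟨p, hp0, hp1, hp⟩ := minimax hne
    (f := fun x (q : Y → ℝ) => ∑ y, (W x y).toReal ^ a * q y ^ (1 - a))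
    (fun x => ⟨posSimplex_convex, by
      intro v hv w hw s t hs ht hst
      simp only [smul_eq_mul, Pi.add_apply, Pi.smul_apply, Finset.mul_sum]
      rw [← Finset.sum_add_distrib]
      refine Finset.sum_le_sum fun y _ => ?_
      have := mul_le_mul_of_nonneg_left
        (rpow_convex (by linarith : 1 - a ≤ 0) hs ht hst (hv.1 y) (hw.1 y))
        (by positivity : 0 ≤ (W x y).toReal ^ a)
      linarith⟩) hex
  have hP := isDist_ofReal hp0 hp1
  refine absurd hr (not_lt.2 ?_)
  refine le_trans ?_ (le_iSup (fun P : {P : X → ℝ≥0∞ // IsDist P} => renyiMI α (joint P.1 W))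
    ⟨_, hP⟩)
  simp only
  unfold renyiMI
  rw [margX_joint hW]
  refine le_iInf fun ⟨Q, hQ⟩ => ?_
  simp only
  by_contra hlt
  push Not at hlt
  obtain ⟨e, he1, he2⟩ := EReal.lt_iff_exists_real_btwn.1 hlt
  have her : e < r1 := by exact_mod_cast he2
  have hS := (renyiD_gt_le_iff h1 ht _ _ _).1 he1.le
  rw [← haa] at hS
  obtain ⟨q, hq, hqQ⟩ := mix hQ (d := (r1 - e) / 2) (by linarith)
  have h5 : p2 ((a - 1) * r1) ≤ ∑ x, ENNReal.ofReal (p x) *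
      ∑ y, W x y ^ a * ENNReal.ofReal (q y) ^ (1 - a) := by
    simp_rw [conv q hq, ← fun x => ENNReal.ofReal_mul (q := ∑ y, (W x y).toReal ^ a *
      q y ^ (1 - a)) (hp0 x)]
    rw [← ENNReal.ofReal_sum_of_nonneg fun x _ => mul_nonneg (hp0 x)
      (Finset.sum_nonneg fun y _ => mul_nonneg (by positivity)
        (Real.rpow_nonneg (hq.1 y).le _))]
    exact ENNReal.ofReal_le_ofReal (hp q hq)
  have h6 : ∑ x, ENNReal.ofReal (p x) * ∑ y, W x y ^ a * ENNReal.ofReal (q y) ^ (1 - a) ≤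
      p2 ((r1 - e) / 2 * (a - 1)) * p2 ((a - 1) * e) := by
    refine le_trans ?_ (mul_le_mul_right hS _)
    rw [Fintype.sum_prod_type, Finset.mul_sum]
    refine Finset.sum_le_sum fun x _ => ?_
    rw [Finset.mul_sum, Finset.mul_sum]
    refine Finset.sum_le_sum fun y _ => ?_
    unfold joint
    simp only
    rw [joint_term ENNReal.ofReal_ne_top (hQ.ne_top y) (hW.ne_top x y) (by linarith)]
    have h7 := rpow_anti (hqQ y) (z := a - 1) (by linarith)
    rw [neg_sub, ENNReal.mul_rpow_of_ne_top (p2_ne_top _) (hQ.ne_top y), p2_rpow] at h7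
    have h8 : -((r1 - e) / 2) * (1 - a) = (r1 - e) / 2 * (a - 1) := by ring
    rw [h8] at h7
    calc _ ≤ ENNReal.ofReal (p x) * (W x y ^ a * (p2 ((r1 - e) / 2 * (a - 1)) *
          Q y ^ (1 - a))) := mul_le_mul_right (mul_le_mul_right h7 _) _
      _ = _ := by ring
  have h9 := h5.trans h6
  rw [← p2_add, p2_le_iff] at h9
  nlinarith


lemma posSimplex_nonempty [Fintype Y] [Nonempty Y] : (posSimplex Y).Nonempty := by
  obtain ⟨y⟩ := ‹Nonempty Y›
  obtain ⟨q, hq, _⟩ := mix (Q := fun y' => if y' = y then 1 else 0) (by simp [IsDist])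
    one_pos
  exact ⟨q, hq⟩

lemma logb_div_convex {w a b x y : ℝ} (hw : 0 ≤ w) (ha : 0 ≤ a) (hb : 0 ≤ b) (hab : a + b = 1)
    (hx : 0 < x) (hy : 0 < y) : w * Real.logb 2 (w / (a * x + b * y)) ≤
      a * (w * Real.logb 2 (w / x)) + b * (w * Real.logb 2 (w / y)) := by
  rcases hw.eq_or_lt with h0 | h0
  · rw [← h0]; simp
  have hlog := strictConcaveOn_log_Ioi.concaveOn.2 (Set.mem_Ioi.2 hx) (Set.mem_Ioi.2 hy) ha hb hab
  simp only [smul_eq_mul] at hlog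
  have hpos : 0 < a * x + b * y := by
    rcases ha.eq_or_lt with h0 | h0
    · have : b = 1 := by linarith
      rw [← h0, this]; simpa using hy
    · have h1 := mul_pos h0 hx
      have h2 := mul_nonneg hb hy.le
      linarith
  have hl : 0 < Real.log 2 := Real.log_pos (by norm_num)
  have key : Real.log (w / (a * x + b * y)) ≤ a * Real.log (w / x) + b * Real.log (w / y) := by
    rw [Real.log_div h0.ne' hpos.ne', Real.log_div h0.ne' hx.ne', Real.log_div h0.ne' hy.ne']
    have : Real.log w = a * Real.log w + b * Real.log w := by rw [← add_mul, hab, one_mul]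
    linarith
  unfold Real.logb
  have e : a * (w * (Real.log (w / x) / Real.log 2)) + b * (w * (Real.log (w / y) / Real.log 2))
      = w * ((a * Real.log (w / x) + b * Real.log (w / y)) / Real.log 2) := by ring
  rw [e]
  gcongr

lemma exists_Q_one [Fintype X] [Fintype Y] [Nonempty Y] {W : X → Y → ℝ≥0∞} (hW : IsChannel W)
    {r1 : ℝ} (hr : renyiCap 1 W < (r1 : EReal)) :
    ∃ q ∈ posSimplex Y,
      ∀ x, ∑ y, (W x y).toReal * Real.logb 2 ((W x y).toReal / q y) < r1 := by
  by_contra hcon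
  push Not at hcon
  obtain ⟨p, hp0, hp1, hp⟩ := minimax posSimplex_nonempty
    (f := fun x (q : Y → ℝ) => ∑ y, (W x y).toReal * Real.logb 2 ((W x y).toReal / q y))
    (fun x => ⟨posSimplex_convex, by
      intro v hv w hw s t hs ht hst
      simp only [smul_eq_mul, Pi.add_apply, Pi.smul_apply, Finset.mul_sum]
      rw [← Finset.sum_add_distrib]
      refine Finset.sum_le_sum fun y _ => ?_
      exact logb_div_convex ENNReal.toReal_nonneg hs ht hst (hv.1 y) (hw.1 y)⟩) hcon
  have hP := isDist_ofReal hp0 hp1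
  refine absurd hr (not_lt.2 ?_)
  refine le_trans ?_ (le_iSup (fun P : {P : X → ℝ≥0∞ // IsDist P} => renyiMI 1 (joint P.1 W))
    ⟨_, hP⟩)
  simp only
  unfold renyiMI
  rw [margX_joint hW]
  refine le_iInf fun ⟨Q, hQ⟩ => ?_
  simp only
  by_contra hlt
  push Not at hlt
  obtain ⟨e, he1, he2⟩ := EReal.lt_iff_exists_real_btwn.1 hlt
  have her : e < r1 := by exact_mod_cast he2
  obtain ⟨hsupp, hS⟩ := (renyiD_one_le_iff _ _
    (fun z => ENNReal.mul_ne_top (hP.ne_top _) (hW.ne_top _ _))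
    (fun z => ENNReal.mul_ne_top (hP.ne_top _) (hQ.ne_top _)) _).1 he1.le
  obtain ⟨q, hq, hqQ⟩ := mix hQ (d := (r1 - e) / 2) (by linarith)
  have h5 := hp q hq
  have h6 : ∑ x, p x * ∑ y, (W x y).toReal * Real.logb 2 ((W x y).toReal / q y) ≤
      e + (r1 - e) / 2 := by
    have h7 : ∑ x, ∑ y, p x * (W x y).toReal = 1 := by
      simp_rw [← Finset.mul_sum, fun x => IsDist.sum_toReal (P := W x) (hW x), mul_one, hp1]
    calc _ ≤ ∑ x, ∑ y, (p x * (W x y).toReal * Real.logb 2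
            ((p x * (W x y).toReal) / (p x * (Q y).toReal)) +
            p x * (W x y).toReal * ((r1 - e) / 2)) := by
          refine Finset.sum_le_sum fun x _ => ?_
          rw [Finset.mul_sum]
          refine Finset.sum_le_sum fun y _ => ?_
          by_cases hpw : p x * (W x y).toReal = 0
          · rw [← mul_assoc, hpw]; simp
          · have hpx : 0 < p x := lt_of_le_of_ne (hp0 x) (Ne.symm (mul_ne_zero_iff.1 hpw).1)
            have hwx : 0 < (W x y).toReal := lt_of_le_of_ne ENNReal.toReal_nonneg
              (Ne.symm (mul_ne_zero_iff.1 hpw).2)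
            have hW0 : W x y ≠ 0 := fun h => hwx.ne' (by rw [h]; rfl)
            have hQ0 : Q y ≠ 0 := (mul_ne_zero_iff.1 (hsupp (x, y)
              (mul_ne_zero (by simpa using hpx) hW0))).2
            have hQr : 0 < (Q y).toReal := ENNReal.toReal_pos hQ0 (hQ.ne_top y)
            have hqr : (2:ℝ) ^ (-((r1 - e) / 2)) * (Q y).toReal ≤ q y := by
              have := ENNReal.toReal_mono ENNReal.ofReal_ne_top (hqQ y)
              unfold p2 at this
              rwa [ENNReal.toReal_mul, ENNReal.toReal_ofReal (by positivity),
                ENNReal.toReal_ofReal (hq.1 y).le] at this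
            rw [mul_div_mul_left _ _ hpx.ne', ← mul_assoc, ← mul_add]
            refine mul_le_mul_of_nonneg_left ?_ (mul_pos hpx hwx).le
            rw [Real.logb_div hwx.ne' (hq.1 y).ne', Real.logb_div hwx.ne' hQr.ne']
            have h8 := Real.logb_le_logb_of_le (by norm_num : (1:ℝ) < 2) (by positivity) hqr
            rw [Real.logb_mul (by positivity) hQr.ne', Real.logb_rpow (by norm_num)
              (by norm_num)] at h8
            linarith
      _ = ∑ x, ∑ y, p x * (W x y).toReal * Real.logb 2
            ((p x * (W x y).toReal) / (p x * (Q y).toReal)) + (r1 - e) / 2 := by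
          simp_rw [Finset.sum_add_distrib, ← Finset.sum_mul]
          rw [h7, one_mul]
      _ ≤ _ := by
          gcongr
          refine le_trans (le_of_eq ?_) hS
          rw [Fintype.sum_prod_type]
          refine Finset.sum_congr rfl fun x _ => Finset.sum_congr rfl fun y _ => ?_
          simp only [ENNReal.toReal_mul, ENNReal.toReal_ofReal (hp0 x)]
  linarith

lemma exists_Q_zero [Fintype X] [Fintype Y] [Nonempty Y] {W : X → Y → ℝ≥0∞} (hW : IsChannel W)
    {r1 : ℝ} (hr : renyiCap 0 W < (r1 : EReal)) :
    ∃ Q : Y → ℝ≥0∞, IsDist Q ∧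
      ∀ x, p2 (-r1) ≤ ∑ y, if W x y ≠ 0 then Q y else 0 := by
  by_contra hcon
  push Not at hcon
  have hex : ∀ q ∈ stdSimplex ℝ Y, ∃ x, -(2:ℝ) ^ (-r1) ≤
      -∑ y, if W x y ≠ 0 then q y else 0 := by
    intro q hq
    obtain ⟨x, hx⟩ := hcon _ (isDist_ofReal hq.1 hq.2)
    refine ⟨x, neg_le_neg ?_⟩
    have : ∑ y, (if W x y ≠ 0 then ENNReal.ofReal (q y) else 0)
        = ENNReal.ofReal (∑ y, if W x y ≠ 0 then q y else 0) := by
      rw [ENNReal.ofReal_sum_of_nonneg]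
      · refine Finset.sum_congr rfl fun y _ => ?_
        split_ifs <;> simp
      · intro y _
        split_ifs
        · exact hq.1 y
        · exact le_rfl
    rw [this] at hx
    exact ((ENNReal.ofReal_le_ofReal_iff (by positivity)).1 hx.le)
  obtain ⟨y0⟩ := id ‹Nonempty Y›
  obtain ⟨p, hp0, hp1, hp⟩ := minimax (K := stdSimplex ℝ Y) ⟨_, single_mem_stdSimplex ℝ y0⟩
    (f := fun x (q : Y → ℝ) => -∑ y, if W x y ≠ 0 then q y else 0)
    (fun x => ⟨convex_stdSimplex ℝ Y, by
      intro v hv w hw s t hs ht hst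
      simp only [smul_eq_mul, Pi.add_apply, Pi.smul_apply, mul_neg, Finset.mul_sum]
      rw [← neg_add, ← Finset.sum_add_distrib]
      refine neg_le_neg (Finset.sum_le_sum fun y _ => ?_)
      split_ifs
      · exact le_rfl
      · simp⟩) hex
  have hP := isDist_ofReal hp0 hp1
  refine absurd hr (not_lt.2 ?_)
  refine le_trans ?_ (le_iSup (fun P : {P : X → ℝ≥0∞ // IsDist P} => renyiMI 0 (joint P.1 W))
    ⟨_, hP⟩)
  simp only
  unfold renyiMI
  rw [margX_joint hW]
  refine le_iInf fun ⟨Q, hQ⟩ => ?_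
  simp only
  rw [le_renyiD_zero_iff]
  have h5 := hp (fun y => (Q y).toReal) ⟨fun y => ENNReal.toReal_nonneg, hQ.sum_toReal⟩
  simp only [mul_neg, Finset.sum_neg_distrib] at h5
  rw [neg_le_neg_iff] at h5
  refine le_trans ?_ (ENNReal.ofReal_le_ofReal h5)
  rw [ENNReal.ofReal_sum_of_nonneg, Finset.sum_filter, Fintype.sum_prod_type]
  · refine Finset.sum_le_sum fun x _ => ?_
    rw [ENNReal.ofReal_mul (hp0 x), ENNReal.ofReal_sum_of_nonneg, Finset.mul_sum]
    · refine Finset.sum_le_sum fun y _ => ?_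
      unfold joint
      simp only
      by_cases h : W x y = 0
      · simp [h]
      · simp only [ne_eq, h, not_false_eq_true, if_true]
        rw [ENNReal.ofReal_toReal (hQ.ne_top y)]
        split_ifs
        · exact zero_le
        · exact le_rfl
    · intro y _
      split_ifs
      · exact ENNReal.toReal_nonneg
      · exact le_rfl
  · intro x _
    refine mul_nonneg (hp0 x) (Finset.sum_nonneg fun y _ => ?_)
    split_ifs
    · exact ENNReal.toReal_nonneg
    · exact le_rfl


lemma exists_dist [Fintype X] [Nonempty X] : ∃ P : X → ℝ≥0∞, IsDist P ∧ ∀ x, P x ≠ 0 := by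
  obtain ⟨q, hq⟩ := posSimplex_nonempty (Y := X)
  exact ⟨_, isDist_ofReal (fun x => (hq.1 x).le) hq.2, fun x => by simpa using hq.1 x⟩

lemma renyiCap_nonneg [Fintype X] [Fintype Y] [Nonempty X] {W : X → Y → ℝ≥0∞}
    (hW : IsChannel W) (α : ℝ≥0∞) : 0 ≤ renyiCap α W := by
  obtain ⟨P, hP, _⟩ := exists_dist (X := X)
  refine le_trans ?_ (le_iSup (fun P : {P : X → ℝ≥0∞ // IsDist P} => renyiMI α (joint P.1 W))
    ⟨P, hP⟩)
  simp only
  unfold renyiMI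
  rw [margX_joint hW]
  refine le_iInf fun ⟨Q, hQ⟩ => renyiD_nonneg α ?_ ?_
  · unfold IsDist joint
    rw [Fintype.sum_prod_type]
    simp_rw [← Finset.mul_sum, hW _, mul_one]
    exact hP
  · unfold IsDist
    rw [Fintype.sum_prod_type]
    simp only
    simp_rw [← Finset.mul_sum]
    rw [hQ]
    simp_rw [mul_one]
    exact hP

lemma ach_final_gt [Fintype X] [Fintype Y] [Nonempty X] [Nonempty Y] {W : X → Y → ℝ≥0∞}
    (hW : IsChannel W) {α : ℝ≥0∞} (h1 : 1 < α) (ht : α ≠ ⊤) {r : ℝ}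
    (hr : renyiCap α W < (r : EReal)) : Rrst α W ≤ (r : EReal) := by
  obtain ⟨r1, hr1, hr2⟩ := EReal.lt_iff_exists_real_btwn.1 hr
  have hr2' : r1 < r := by exact_mod_cast hr2
  have hr0 : 0 ≤ r := by exact_mod_cast (renyiCap_nonneg hW α).trans hr.le
  obtain ⟨Q, hQ, hQ0, hWQ⟩ := exists_Q_gt hW h1 ht hr1
  have ha := toReal_gt h1 ht
  refine Rrst_le α hW hr0 fun ε hε => ?_
  have hgt : (1:ℝ) < 2 ^ ((α.toReal - 1) * ε) :=
    Real.one_lt_rpow (by norm_num) (mul_pos (by linarith) hε)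
  filter_upwards [ach_gt hW hQ hQ0 ha hWQ hr0 hr2' (sub_pos.2 hgt)] with n ⟨N, hN, hNN⟩
  refine ⟨N, hN, fun xs => ?_⟩
  rw [renyiD_gt_le_iff h1 ht]
  have := hNN xs
  rwa [add_sub_cancel] at this

lemma ach_final_le [Fintype X] [Fintype Y] [Nonempty X] [Nonempty Y] {W : X → Y → ℝ≥0∞}
    (hW : IsChannel W) {α : ℝ≥0∞} (h0 : 0 < α) (h1 : α ≤ 1) {r : ℝ}
    (hr : renyiCap 1 W < (r : EReal)) : Rrst α W ≤ (r : EReal) := by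
  obtain ⟨r1, hr1, hr2⟩ := EReal.lt_iff_exists_real_btwn.1 hr
  have hr2' : r1 < r := by exact_mod_cast hr2
  have hr0 : 0 ≤ r := by exact_mod_cast (renyiCap_nonneg hW 1).trans hr.le
  obtain ⟨q, hq, hWq⟩ := exists_Q_one hW hr1
  have hl2 : 0 < Real.log 2 := Real.log_pos (by norm_num)
  have hmgf : ∀ x, ∀ᶠ s in nhdsWithin (0:ℝ) (Set.Ioi 0), ∑ y, (W x y).toReal * Real.exp
      (s * ((Real.logb 2 ((W x y).toReal / q y) - r1) * Real.log 2)) < 1 := by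
    intro x
    refine mgf_lemma (fun y => (W x y).toReal)
      (fun y => (Real.logb 2 ((W x y).toReal / q y) - r1) * Real.log 2)
      (IsDist.sum_toReal (P := W x) (hW x)) ?_
    have h2 : ∑ y, (W x y).toReal * ((Real.logb 2 ((W x y).toReal / q y) - r1) * Real.log 2)
        = (∑ y, (W x y).toReal * Real.logb 2 ((W x y).toReal / q y)) * Real.log 2
          - (∑ y, (W x y).toReal) * (r1 * Real.log 2) := by
      rw [Finset.sum_mul, Finset.sum_mul, ← Finset.sum_sub_distrib]
      exact Finset.sum_congr rfl fun y _ => by ring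
    rw [h2, IsDist.sum_toReal (P := W x) (hW x)]
    have := hWq x
    nlinarith
  obtain ⟨s, hs, hs0⟩ := ((eventually_all.2 hmgf).and self_mem_nhdsWithin).exists
  have hs0' : (0:ℝ) < s := hs0
  have hQ := isDist_ofReal (fun y => (hq.1 y).le) hq.2
  have hb : 1 < 1 + s := by linarith
  have hWQ : ∀ x, ∑ y, W x y ^ (1 + s) * ENNReal.ofReal (q y) ^ (1 - (1 + s)) ≤
      p2 ((1 + s - 1) * r1) := by
    intro x
    rw [sum_rpow_eq (P := W x) (hW.ne_top x) (fun y => ENNReal.ofReal_ne_top) (by linarith)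
      (Or.inr fun y _ => by simpa using hq.1 y)]
    apply ENNReal.ofReal_le_ofReal
    have e : ∀ y, (W x y).toReal ^ (1 + s) * (ENNReal.ofReal (q y)).toReal ^ (1 - (1 + s)) =
        2 ^ ((1 + s - 1) * r1) * ((W x y).toReal * Real.exp
          (s * ((Real.logb 2 ((W x y).toReal / q y) - r1) * Real.log 2))) := by
      intro y
      rw [ENNReal.toReal_ofReal (hq.1 y).le]
      rcases (ENNReal.toReal_nonneg (a := W x y)).eq_or_lt with h | h
      · rw [← h, Real.zero_rpow (by linarith)]; simp
      · have hqy := hq.1 y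
        rw [Real.rpow_def_of_pos h, Real.rpow_def_of_pos hqy,
          Real.rpow_def_of_pos (by norm_num : (0:ℝ) < 2)]
        conv_rhs => rw [← Real.exp_log h]
        rw [← Real.exp_add, ← Real.exp_add, ← Real.exp_add, Real.exp_log h]
        congr 1
        rw [Real.logb, Real.log_div h.ne' hqy.ne']
        field_simp
        ring
    simp_rw [e]
    rw [← Finset.mul_sum]
    exact mul_le_of_le_one_right (by positivity) (hs x).le
  refine Rrst_le α hW hr0 fun ε hε => ?_
  obtain ⟨κ, hκ, hclose⟩ := close_of_gt h0 h1 hb hε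
  filter_upwards [ach_gt hW hQ (fun y => by simpa using hq.1 y) hb hWQ hr0 hr2' hκ]
    with n ⟨N, hN, hNN⟩
  exact ⟨N, hN, fun xs => hclose _ _ _ (prodCh_isChannel hW n xs) (hN.isChannel xs) (hNN xs)⟩

lemma one_sub_eta {ε : ℝ} (hε : 0 < ε) : ∃ η : ℝ, 0 < η ∧ ENNReal.ofReal (1 - η) = p2 (-ε) := by
  refine ⟨1 - 2 ^ (-ε), ?_, ?_⟩
  · rw [sub_pos]
    exact Real.rpow_lt_one_of_one_lt_of_neg (by norm_num) (by linarith)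
  · rw [sub_sub_cancel]; rfl

lemma ach_final_top [Fintype X] [Fintype Y] [Nonempty X] {W : X → Y → ℝ≥0∞}
    (hW : IsChannel W) {r : ℝ}
    (hr : renyiCap ⊤ W < (r : EReal)) : Rrst ⊤ W ≤ (r : EReal) := by
  have hr0 : 0 ≤ r := by exact_mod_cast (renyiCap_nonneg hW ⊤).trans hr.le
  choose xm hxm using fun y => Finite.exists_max fun x => W x y
  set S := ∑ y, W (xm y) y with hS
  have hSt : S ≠ ⊤ := ENNReal.sum_ne_top.2 fun y _ => hW.ne_top _ _
  have hS0 : S ≠ 0 := by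
    obtain ⟨x⟩ := ‹Nonempty X›
    have : 1 ≤ S := hW x ▸ Finset.sum_le_sum fun y _ => hxm y x
    exact (zero_lt_one.trans_le this).ne'
  obtain ⟨v, hv⟩ := p2_exists hS0 hSt
  have hvc : (v : EReal) ≤ renyiCap ⊤ W := by
    obtain ⟨P, hP, hP0⟩ := exists_dist (X := X)
    refine le_trans ?_ (le_iSup (fun P : {P : X → ℝ≥0∞ // IsDist P} =>
      renyiMI ⊤ (joint P.1 W)) ⟨P, hP⟩)
    simp only
    unfold renyiMI
    rw [margX_joint hW]
    refine le_iInf fun ⟨Q, hQ⟩ => ?_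
    simp only
    by_contra hlt
    push Not at hlt
    obtain ⟨e, he1, he2⟩ := EReal.lt_iff_exists_real_btwn.1 hlt
    have her : e < v := by exact_mod_cast he2
    have h1 := (renyiD_top_le_iff _ _ _).1 he1.le
    have h2 : ∀ x y, W x y ≤ p2 e * Q y := by
      intro x y
      have h3 : P x * W x y ≤ p2 e * (P x * Q y) := h1 (x, y)
      rw [mul_left_comm] at h3
      exact (ENNReal.mul_le_mul_iff_right (hP0 x) (hP.ne_top x)).1 h3
    have h4 : S ≤ p2 e := by
      calc S ≤ ∑ y, p2 e * Q y := Finset.sum_le_sum fun y _ => h2 _ _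
        _ = p2 e := by rw [← Finset.mul_sum, hQ, mul_one]
    rw [hv, p2_le_iff] at h4
    linarith
  have hvr : v < r := by exact_mod_cast hvc.trans_lt hr
  have hQ : IsDist fun y => W (xm y) y / S := by
    unfold IsDist
    simp_rw [div_eq_mul_inv]
    rw [← Finset.sum_mul, ← hS, ENNReal.mul_inv_cancel hS0 hSt]
  have hWQ : ∀ x y, W x y ≤ p2 v * (W (xm y) y / S) := by
    intro x y
    rw [← hv, ENNReal.mul_div_cancel hS0 hSt]
    exact hxm y x
  refine Rrst_le ⊤ hW hr0 fun ε hε => ?_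
  obtain ⟨η, hη, hηe⟩ := one_sub_eta hε
  filter_upwards [ach_top hW hQ hWQ hr0 hvr hη] with n ⟨N, hN, hNN⟩
  refine ⟨N, hN, fun xs => ?_⟩
  rw [renyiD_top_le_iff]
  intro ys
  have h5 := mul_le_mul_right (hNN xs ys) (p2 ε)
  rw [hηe, ← mul_assoc, ← p2_add, add_neg_cancel, p2_zero, one_mul] at h5
  exact h5

lemma ach_final_zero [Fintype X] [Fintype Y] [Nonempty X] [Nonempty Y] {W : X → Y → ℝ≥0∞}
    (hW : IsChannel W) {r : ℝ}
    (hr : renyiCap 0 W < (r : EReal)) : Rrst 0 W ≤ (r : EReal) := by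
  obtain ⟨r1, hr1, hr2⟩ := EReal.lt_iff_exists_real_btwn.1 hr
  have hr2' : r1 < r := by exact_mod_cast hr2
  have hr0 : 0 ≤ r := by exact_mod_cast (renyiCap_nonneg hW 0).trans hr.le
  obtain ⟨Q, hQ, hQW⟩ := exists_Q_zero hW hr1
  set S : X → ℝ≥0∞ := fun x => ∑ y, if W x y ≠ 0 then Q y else 0 with hS
  have hS0 : ∀ x, S x ≠ 0 := fun x => ((p2_pos _).trans_le (hQW x)).ne'
  have hSt : ∀ x, S x ≠ ⊤ := fun x => ENNReal.sum_ne_top.2 fun y _ => by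
    split_ifs
    · exact hQ.ne_top y
    · exact ENNReal.zero_ne_top
  set V : X → Y → ℝ≥0∞ := fun x y => (if W x y ≠ 0 then Q y else 0) / S x with hV
  have hVc : IsChannel V := by
    intro x
    rw [hV]
    simp only [div_eq_mul_inv]
    rw [← Finset.sum_mul]
    exact ENNReal.mul_inv_cancel (hS0 x) (hSt x)
  have hVQ : ∀ x y, V x y ≤ p2 r1 * Q y := by
    intro x y
    rw [hV]
    simp only
    rw [div_eq_mul_inv, mul_comm]
    refine mul_le_mul' ?_ ?_
    · have := ENNReal.inv_le_inv.2 (hQW x)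
      rwa [p2_inv, neg_neg] at this
    · split_ifs
      · exact le_rfl
      · exact zero_le
  refine Rrst_le 0 hW hr0 fun ε hε => ?_
  obtain ⟨η, hη, hηe⟩ := one_sub_eta hε
  filter_upwards [ach_top hVc hQ hVQ hr0 hr2' hη] with n ⟨N, hN, hNN⟩
  refine ⟨N, hN, fun xs => ?_⟩
  rw [renyiD_zero_le_iff]
  change p2 (-ε) ≤ _
  calc p2 (-ε) = ∑ ys, p2 (-ε) * prodCh n V xs ys := by
        rw [← Finset.mul_sum, prodCh_isChannel hVc n xs, mul_one]
    _ = ∑ ys ∈ Finset.univ.filter fun ys => prodCh n W xs ys ≠ 0,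
          p2 (-ε) * prodCh n V xs ys := by
        symm
        apply Finset.sum_filter_of_ne
        intro ys _ hne hz
        apply hne
        unfold prodCh at hz ⊢
        obtain ⟨i, hi, hi0⟩ := Finset.prod_eq_zero_iff.1 hz
        rw [Finset.prod_eq_zero hi (by rw [hV]; simp [hi0]), mul_zero]
    _ ≤ _ := by
        refine Finset.sum_le_sum fun ys _ => ?_
        rw [← hηe]
        exact hNN xs ys

lemma le_of_real {a b : EReal} (h : ∀ r : ℝ, b < (r : EReal) → a ≤ (r : EReal)) : a ≤ b := by
  refine le_of_forall_gt_imp_ge_of_dense fun z hz => ?_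
  obtain ⟨r, hr1, hr2⟩ := EReal.lt_iff_exists_real_btwn.1 hz
  exact (h r hr1).trans hr2.le


end

/-- **Reverse Shannon theorem under Rényi divergence** (Theorem 1).
For any discrete memoryless channel `W : X → Y` on finite alphabets, the `α`-Rényi
simulation rate equals the Shannon capacity `I(W) = I_1(W)` for `α ∈ (0,1]`, and the
order-`α` Rényi capacity `I_α(W)` for `α ∈ {0} ∪ (1,∞]`. -/
theorem renyi_simulation_rate
    {X Y : Type*} [Fintype X] [Fintype Y] [Nonempty X] [Nonempty Y]
    (W : X → Y → ℝ≥0∞) (hW : IsChannel W) :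
    (∀ α : ℝ≥0∞, 0 < α → α ≤ 1 → Rrst α W = renyiCap 1 W) ∧
    (∀ α : ℝ≥0∞, α = 0 ∨ 1 < α → Rrst α W = renyiCap α W) := by
  refine ⟨fun α h0 h1 => le_antisymm (le_of_real fun r hr => ach_final_le hW h0 h1 hr)
      (iSup_le fun P => conv_le hW P.2 h0 h1), fun α hα => ?_⟩
  rcases hα with rfl | h1
  · exact le_antisymm (le_of_real fun r hr => ach_final_zero hW hr)
      (iSup_le fun P => conv_zero hW P.2)
  · by_cases ht : α = ⊤
    · subst ht
      exact le_antisymm (le_of_real fun r hr => ach_final_top hW hr)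
        (iSup_le fun P => conv_top hW P.1)
    · exact le_antisymm (le_of_real fun r hr => ach_final_gt hW h1 ht hr)
        (iSup_le fun P => conv_gt hW P.2 h1 ht)

end RST
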